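/- Let n ≥ 2. For each j = 1, …, n let T_{j,1}, …, T_{j,A(j)} be finitely many unit cylinders in ℝ^n with core directions v_{j,a}, and assume that for every choice of indices a_1, …, a_n the determinant of the matrix with columns v_{1,a_1}, …, v_{n,a_n} has absolute value at least θ > 0. For each cube Q of the standard unit lattice {∏_{i=1}^n [k_i, k_i+1) : k ∈ ℤ^n}, let M_j(Q) be the number of indices a ∈ {1, …, A(j)} such that T_{j,a} ∩ Q ≠ ∅, and let F(Q) := ∏_{j=1}^n M_j(Q). Then ∑_{Q} F(Q)^{1/(n-1)} ≤ C(n) θ^{-1/(n-1)} ∏_{j=1}^n A(j)^{1/(n-1)}, where the sum is over all cubes of the unit lattice and C(n) depends only on n. -/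

import Mathlib

/-!
Let `f` be the vector of all monomials of degree at most `d` in each variable. For a linear
automorphism `A`, the map `u = A f / ‖A f‖` into a sphere has variation `O(d)` along every line: by
Crofton's formula its length is an average of the number of zeros of a polynomial. An `A` that puts
the values of `f` in radial isotropic position for a measure on the cubes makes `u` spread over all
directions in each cube, the more so the larger the mass of the cube. As `u` cannot then be nearly
constant on a large parallelepiped inside a cube, the product of its variations over the cube in `n`
directions is at least the determinant of these directions times the mass, up to a constant.
Choosing the mass of each cube proportional to its summand, letting `d` be the number of cubes, and
integrating the variation over the cylinders, Hölder's inequality gives the theorem.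
-/

open MeasureTheory
open scoped ENNReal

/-- The cylinder of radius `r` around the line through `p` with direction `v`. -/
noncomputable def cylinder {n : ℕ} (p v : EuclideanSpace ℝ (Fin n)) (r : ℝ) :
    Set (EuclideanSpace ℝ (Fin n)) :=
  {x | Metric.infDist x {y | ∃ t : ℝ, y = p + t • v} ≤ r}

/-- The cube of the standard unit lattice with corner `k ∈ ℤ^n`. -/
def latticeCube {n : ℕ} (k : Fin n → ℤ) : Set (EuclideanSpace ℝ (Fin n)) :=
  {x | ∀ i : Fin n, (k i : ℝ) ≤ x i ∧ x i < (k i : ℝ) + 1}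

section TotalVariation

variable {E : Type*} [NormedAddCommGroup E] [NormedSpace ℝ E]

lemma norm_deriv_le_deriv_of_norm_sub_le {f : ℝ → E} {V : ℝ → ℝ} {t : ℝ} (hV : Monotone V)
    (h : ∀ s t, s ≤ t → ‖f t - f s‖ ≤ V t - V s) (hVt : DifferentiableAt ℝ V t) :
    ‖deriv f t‖ ≤ deriv V t := by
  have hV0 : 0 ≤ deriv V t := hV.deriv_nonneg
  by_cases hft : DifferentiableAt ℝ f t
  · have hfs := (hasDerivAt_iff_tendsto_slope.1 hft.hasDerivAt).norm
    have hVs := (hasDerivAt_iff_tendsto_slope.1 hVt.hasDerivAt).norm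
    rw [← Real.norm_of_nonneg hV0]
    refine le_of_tendsto_of_tendsto' hfs hVs fun s => ?_
    rw [slope_def_module, slope_def_module, norm_smul, norm_smul]
    gcongr
    rcases le_total s t with hst | hts
    · rw [norm_sub_rev, norm_sub_rev (V s)]
      exact (h s t hst).trans (Real.le_norm_self _)
    · exact (h t s hts).trans (Real.le_norm_self _)
  · rwa [deriv_zero_of_not_differentiableAt hft, norm_zero]

lemma setLIntegral_deriv_le_of_monotone {V : ℝ → ℝ} (hV : Monotone V) {a b : ℝ} (hab : a ≤ b) :
    ∫⁻ t in Set.Ioc a b, ENNReal.ofReal (deriv V t) ≤ ENNReal.ofReal (V b - V a) := by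
  have hmem := (hV.monotoneOn (Set.uIcc a b)).intervalIntegral_deriv_mem_uIcc
  have hint := (hV.monotoneOn (Set.uIcc a b)).intervalIntegrable_deriv
  rw [Set.uIcc_of_le (sub_nonneg.2 (hV hab)), intervalIntegral.integral_of_le hab] at hmem
  rw [intervalIntegrable_iff_integrableOn_Ioc_of_le hab] at hint
  rw [← ofReal_integral_eq_lintegral_ofReal hint (ae_of_all _ fun _ => hV.deriv_nonneg)]
  exact ENNReal.ofReal_le_ofReal hmem.2

lemma lintegral_enorm_deriv_le_eVariationOn (f : ℝ → E) :
    ∫⁻ t, ‖deriv f t‖ₑ ≤ eVariationOn f Set.univ := by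
  by_cases htop : eVariationOn f Set.univ = ⊤
  · simp [htop]
  have hbv : LocallyBoundedVariationOn f Set.univ :=
    BoundedVariationOn.locallyBoundedVariationOn htop
  set V := variationOnFromTo f Set.univ 0
  have hV : Monotone V := monotoneOn_univ.1 (variationOnFromTo.monotoneOn hbv trivial)
  have hVsub : ∀ s t, V t - V s = variationOnFromTo f Set.univ s t := fun s t =>
    variationOnFromTo.sub_right hbv trivial trivial trivial
  have hVle : ∀ s t, s ≤ t → ENNReal.ofReal (V t - V s) ≤ eVariationOn f Set.univ := by
    intro s t hst
    rw [hVsub, variationOnFromTo.eq_of_le _ _ hst]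
    exact ENNReal.ofReal_toReal_le.trans (eVariationOn.mono _ Set.inter_subset_left)
  have hfV : ∀ s t, s ≤ t → ‖f t - f s‖ ≤ V t - V s := by
    intro s t hst
    rw [hVsub, variationOnFromTo.eq_of_le _ _ hst, ← dist_eq_norm, dist_comm, dist_edist]
    exact ENNReal.toReal_mono (hbv s t trivial trivial)
      (eVariationOn.edist_le f ⟨trivial, le_rfl, hst⟩ ⟨trivial, hst, le_rfl⟩)
  calc ∫⁻ t, ‖deriv f t‖ₑ ≤ ∫⁻ t, ENNReal.ofReal (deriv V t) := by
        refine lintegral_mono_ae (hV.ae_differentiableAt.mono fun t ht => ?_)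
        rw [← ofReal_norm]
        exact ENNReal.ofReal_le_ofReal (norm_deriv_le_deriv_of_norm_sub_le hV hfV ht)
    _ ≤ eVariationOn f Set.univ := by
        have hcover : AECover volume Filter.atTop fun m : ℕ => Set.Ioc (-(m : ℝ)) m :=
          aecover_Ioc (Filter.tendsto_neg_atTop_atBot.comp tendsto_natCast_atTop_atTop)
            tendsto_natCast_atTop_atTop
        refine le_of_tendsto' (hcover.lintegral_tendsto_of_countably_generated
          (measurable_deriv V).ennreal_ofReal.aemeasurable) fun m => ?_
        have hm : -(m : ℝ) ≤ m := by linarith [(Nat.cast_nonneg m : (0 : ℝ) ≤ m)]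
        exact (setLIntegral_deriv_le_of_monotone hV hm).trans (hVle _ _ hm)

end TotalVariation

section RandomHyperplane

open NormedSpace ProbabilityTheory

variable {E : Type*} [NormedAddCommGroup E] [InnerProductSpace ℝ E] [FiniteDimensional ℝ E]
  [MeasurableSpace E] [BorelSpace E]

lemma stdGaussian_map_inner {a : E} (ha : ‖a‖ = 1) :
    (stdGaussian E).map (fun w => inner ℝ a w) = gaussianReal 0 1 := by
  have h := IsGaussian.map_eq_gaussianReal (μ := stdGaussian E) (innerSL ℝ a)
  rw [integral_strongDual_stdGaussian, variance_dual_stdGaussian, innerSL_apply_norm, ha] at h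
  simpa using h

lemma stdGaussian_inner_preimage {a : E} (ha : ‖a‖ = 1) {s : Set ℝ} (hs : MeasurableSet s) :
    (stdGaussian E) {w | inner ℝ a w ∈ s} = gaussianReal 0 1 s := by
  rw [← stdGaussian_map_inner ha, Measure.map_apply (by fun_prop) hs]
  rfl

lemma indepFun_inner_stdGaussian {a b : E} (hab : inner ℝ a b = 0) :
    IndepFun (fun w => inner ℝ a w) (fun w => inner ℝ b w) (stdGaussian E) := by
  apply HasGaussianLaw.indepFun_of_covariance_eq_zero
  · have : HasGaussianLaw (fun w : E => ((innerSL ℝ a).prod (innerSL ℝ b)) w) (stdGaussian E) :=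
      ⟨by infer_instance⟩
    simpa using this
  · have h := covarianceBilin_apply_eq_cov (μ := stdGaussian E) IsGaussian.memLp_two_id a b
    rw [covarianceBilin_stdGaussian] at h
    exact h.symm.trans hab

lemma gaussianPDFReal_one_le {x : ℝ} (hx : |x| ≤ 1) :
    gaussianPDFReal 0 1 1 ≤ gaussianPDFReal 0 1 x := by
  have hx2 : x ^ 2 ≤ 1 := (sq_le_one_iff_abs_le_one x).2 hx
  simp only [gaussianPDFReal_def]
  refine mul_le_mul_of_nonneg_left (Real.exp_le_exp.2 ?_) (by positivity)
  simp only [sub_zero, one_pow, NNReal.coe_one, mul_one]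
  linarith

lemma mul_gaussianPDFReal_one_le_gaussianReal_abs_lt {r : ℝ} (hr0 : 0 ≤ r) (hr1 : r ≤ 1) :
    ENNReal.ofReal (2 * gaussianPDFReal 0 1 1 * r) ≤ gaussianReal 0 1 {y | |y| < r} := by
  have hset : {y : ℝ | |y| < r} = Set.Ioo (-r) r := by ext y; simp [abs_lt]
  rw [gaussianReal_apply_eq_integral 0 one_ne_zero, hset]
  apply ENNReal.ofReal_le_ofReal
  calc 2 * gaussianPDFReal 0 1 1 * r = ∫ _ in Set.Ioo (-r) r, gaussianPDFReal 0 1 1 := by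
        simp [hr0]; ring
    _ ≤ ∫ x in Set.Ioo (-r) r, gaussianPDFReal 0 1 x :=
        setIntegral_mono_on (integrableOn_const (by simp))
          (integrable_gaussianPDFReal 0 1).integrableOn measurableSet_Ioo
          fun x hx => gaussianPDFReal_one_le ((abs_lt.2 hx).le.trans hr1)

lemma gaussianReal_one_lt_abs_pos : 0 < (gaussianReal 0 1).real {y : ℝ | 1 < |y|} := by
  refine ENNReal.toReal_pos (fun h => ?_) (measure_ne_top _ _)
  have hvol : volume (Set.Ioo (1 : ℝ) 2) ≤ 0 := by
    rw [← gaussianReal_absolutelyContinuous' 0 one_ne_zero h]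
    exact measure_mono fun x hx => hx.1.trans_le (le_abs_self x)
  simp at hvol

/-- A lower bound for the ratio of the probability that a random hyperplane through the origin
separates two unit vectors to their distance. -/
noncomputable def separationConst : ℝ :=
  gaussianPDFReal 0 1 1 * (gaussianReal 0 1).real {y : ℝ | 1 < |y|}

lemma separationConst_pos : 0 < separationConst :=
  mul_pos (gaussianPDFReal_pos 0 1 1 one_ne_zero) gaussianReal_one_lt_abs_pos

lemma ofReal_mul_le_stdGaussian_abs_inner_lt {z : E} (hz : ‖z‖ ≤ 1) {r : ℝ} (hr0 : 0 < r)
    (hr1 : r ≤ 1) :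
    ENNReal.ofReal (2 * gaussianPDFReal 0 1 1 * r) ≤ (stdGaussian E) {w | |inner ℝ z w| < r} := by
  refine (mul_gaussianPDFReal_one_le_gaussianReal_abs_lt hr0.le hr1).trans ?_
  by_cases hz0 : z = 0
  · simp [hz0, hr0, prob_le_one]
  rw [← stdGaussian_inner_preimage (norm_normalize hz0)
    (measurableSet_lt (by fun_prop) measurable_const)]
  refine measure_mono fun w hw => ?_
  have hw' : |inner ℝ (normalize z) w| < r := hw
  change |inner ℝ z w| < r
  rw [← norm_smul_normalize z, real_inner_smul_left, abs_mul, abs_norm]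
  exact (mul_le_of_le_one_left (abs_nonneg _) hz).trans_lt hw'

omit [FiniteDimensional ℝ E] [MeasurableSpace E] [BorelSpace E] in
lemma inner_mul_inner_eq_sq_sub_sq (x y w : E) :
    inner ℝ x w * inner ℝ y w
      = inner ℝ ((2⁻¹ : ℝ) • (x + y)) w ^ 2
        - (‖x - y‖ / 2 * inner ℝ (normalize (x - y)) w) ^ 2 := by
  rw [div_mul_eq_mul_div, ← real_inner_smul_left (normalize (x - y)), norm_smul_normalize,
    real_inner_smul_left, inner_add_left, inner_sub_left]
  ring

/-- The coordinates of the normal of a random hyperplane along the orthogonal vectors `x + y` and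
`x - y` are independent, and the hyperplane separates `x` from `y` as soon as the first is small
and the second is large. -/
lemma ofReal_separationConst_mul_edist_le {x y : E} (hx : ‖x‖ = 1) (hy : ‖y‖ = 1) :
    ENNReal.ofReal separationConst * edist x y
      ≤ (stdGaussian E) {w | inner ℝ x w * inner ℝ y w < 0} := by
  rcases eq_or_ne x y with rfl | hxy
  · simp
  set z : E := (2⁻¹ : ℝ) • (x + y) with hz
  set b : E := normalize (x - y) with hb
  set δ := ‖x - y‖ / 2 with hδ
  have hδ0 : 0 < δ := half_pos (norm_pos_iff.2 (sub_ne_zero.2 hxy))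
  have hδ1 : δ ≤ 1 := by linarith [norm_sub_le x y]
  have hz1 : ‖z‖ ≤ 1 := by
    rw [hz, norm_smul, Real.norm_of_nonneg (by norm_num)]
    linarith [norm_add_le x y]
  have hzb : inner ℝ z b = 0 := by
    have : inner ℝ (x + y) (x - y) = 0 := (real_inner_add_sub_eq_zero_iff x y).2 (hx.trans hy.symm)
    rw [hz, hb, NormedSpace.normalize, real_inner_smul_left, real_inner_smul_right, this, mul_zero,
      mul_zero]
  calc ENNReal.ofReal separationConst * edist x y
      = ENNReal.ofReal (2 * gaussianPDFReal 0 1 1 * δ) * gaussianReal 0 1 {y | 1 < |y|} := by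
        rw [← ofReal_measureReal, edist_dist, dist_eq_norm,
          ← ENNReal.ofReal_mul separationConst_pos.le, ← ENNReal.ofReal_mul
            (by have := gaussianPDFReal_nonneg 0 1 1; positivity), separationConst, hδ]
        ring_nf
    _ ≤ stdGaussian E {w | |inner ℝ z w| < δ} * stdGaussian E {w | 1 < |inner ℝ b w|} := by
        gcongr
        · exact ofReal_mul_le_stdGaussian_abs_inner_lt hz1 hδ0 hδ1
        · exact (stdGaussian_inner_preimage (norm_normalize (sub_ne_zero.2 hxy))
            (measurableSet_lt measurable_const (by fun_prop))).ge
    _ = stdGaussian E ({w | |inner ℝ z w| < δ} ∩ {w | 1 < |inner ℝ b w|}) :=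
        ((indepFun_inner_stdGaussian hzb).measure_inter_preimage_eq_mul {y : ℝ | |y| < δ}
          {y : ℝ | 1 < |y|} (measurableSet_lt (by fun_prop) measurable_const)
          (measurableSet_lt measurable_const (by fun_prop))).symm
    _ ≤ stdGaussian E {w | inner ℝ x w * inner ℝ y w < 0} := by
        refine measure_mono fun w ⟨hzw, hbw⟩ => ?_
        have habs : |inner ℝ z w| < |δ * inner ℝ b w| := by
          rw [abs_mul, abs_of_pos hδ0]
          exact (Set.mem_ofPred.1 hzw).trans (lt_mul_of_one_lt_right hδ0 hbw)
        rw [Set.mem_ofPred_eq, inner_mul_inner_eq_sq_sub_sq]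
        exact sub_neg.2 (sq_lt_sq.2 habs)

end RandomHyperplane

section PolynomialCurve

open NormedSpace Polynomial ProbabilityTheory

lemma card_sign_changes_le_natDegree (q : ℝ[X]) {t : ℕ → ℝ} (ht : Monotone t) (m : ℕ) :
    {i ∈ Finset.range m | q.eval (t (i + 1)) * q.eval (t i) < 0}.card ≤ q.natDegree := by
  rcases eq_or_ne q 0 with rfl | hq
  · simp
  have hroot : ∀ i, q.eval (t (i + 1)) * q.eval (t i) < 0 →
      ∃ z ∈ Set.Ioo (t i) (t (i + 1)), q.eval z = 0 := by
    intro i hi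
    have hc : ContinuousOn (fun z => q.eval z) (Set.Icc (t i) (t (i + 1))) :=
      q.continuous.continuousOn
    rcases mul_neg_iff.1 hi with ⟨h1, h2⟩ | ⟨h1, h2⟩
    · exact intermediate_value_Ioo (ht i.le_succ) hc ⟨h2, h1⟩
    · exact intermediate_value_Ioo' (ht i.le_succ) hc ⟨h1, h2⟩
  choose! z hz hqz using hroot
  calc {i ∈ Finset.range m | q.eval (t (i + 1)) * q.eval (t i) < 0}.card
      ≤ q.roots.toFinset.card := by
        refine Finset.card_le_card_of_injOn z ?_ (StrictMonoOn.injOn ?_)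
        · intro i hi
          rw [Finset.mem_coe, Multiset.mem_toFinset, mem_roots hq]
          exact hqz i (Finset.mem_filter.1 hi).2
        · intro i hi j hj hij
          calc z i < t (i + 1) := (hz i (Finset.mem_filter.1 hi).2).2
            _ ≤ t j := ht hij
            _ < z j := (hz j (Finset.mem_filter.1 hj).2).1
    _ ≤ q.roots.card := Multiset.toFinset_card_le _
    _ ≤ q.natDegree := q.card_roots'

variable {E : Type*} [NormedAddCommGroup E] [InnerProductSpace ℝ E]

/-- A curve in an inner product space each of whose coordinates is a polynomial of degree at most
`D`. -/
def IsPolynomialCurve (G : ℝ → E) (D : ℕ) : Prop :=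
  ∀ w, ∃ q : ℝ[X], q.natDegree ≤ D ∧ ∀ t, inner ℝ (G t) w = q.eval t

lemma inner_normalize_mul_inner_normalize_neg_iff {x y : E} (hx : x ≠ 0) (hy : y ≠ 0) (w : E) :
    inner ℝ (normalize x) w * inner ℝ (normalize y) w < 0 ↔ inner ℝ x w * inner ℝ y w < 0 := by
  have hpos : 0 < ‖x‖ * ‖y‖ := mul_pos (norm_pos_iff.2 hx) (norm_pos_iff.2 hy)
  nth_rw 2 [← norm_smul_normalize x, ← norm_smul_normalize y]
  rw [real_inner_smul_left, real_inner_smul_left, mul_mul_mul_comm]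
  exact (smul_neg_iff_of_pos_left hpos).symm

variable [FiniteDimensional ℝ E] {G : ℝ → E} {D : ℕ}

/-- Integrate the separation estimate over the random hyperplane: each hyperplane meets the curve
at most `D` times. -/
lemma IsPolynomialCurve.eVariationOn_normalize_le (hG : IsPolynomialCurve G D)
    (hG0 : ∀ t, G t ≠ 0) :
    eVariationOn (fun t => normalize (G t)) Set.univ ≤ ENNReal.ofReal (separationConst⁻¹ * D) := by
  borelize E
  have hc := separationConst_pos
  rw [ENNReal.ofReal_mul (inv_nonneg.2 hc.le), ENNReal.ofReal_inv_of_pos hc, ENNReal.ofReal_natCast]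
  refine iSup_le fun ⟨m, t, ht, _⟩ => ?_
  set u : ℝ → E := fun t => normalize (G t)
  set S : ℕ → Set E := fun i => {w | inner ℝ (u (t (i + 1))) w * inner ℝ (u (t i)) w < 0}
  have hS : ∀ i, MeasurableSet (S i) := fun i => measurableSet_lt (by fun_prop) measurable_const
  have hcount : ∀ w, ∑ i ∈ Finset.range m, (S i).indicator 1 w ≤ (D : ℝ≥0∞) := by
    intro w
    obtain ⟨q, hqD, hq⟩ := hG w
    have hSq : ∀ i, w ∈ S i ↔ q.eval (t (i + 1)) * q.eval (t i) < 0 := fun i => by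
      rw [← hq, ← hq]
      exact inner_normalize_mul_inner_normalize_neg_iff (hG0 _) (hG0 _) w
    simp only [Set.indicator_apply, hSq, Pi.one_apply, Finset.sum_boole]
    exact_mod_cast (card_sign_changes_le_natDegree q ht m).trans hqD
  rw [← ENNReal.mul_le_iff_le_inv (by simpa using hc) ENNReal.ofReal_ne_top, Finset.mul_sum]
  calc ∑ i ∈ Finset.range m, ENNReal.ofReal separationConst * edist (u (t (i + 1))) (u (t i))
      ≤ ∑ i ∈ Finset.range m, stdGaussian E (S i) := Finset.sum_le_sum fun i _ =>
        ofReal_separationConst_mul_edist_le (norm_normalize (hG0 _)) (norm_normalize (hG0 _))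
    _ = ∫⁻ w, ∑ i ∈ Finset.range m, (S i).indicator 1 w ∂(stdGaussian E) := by
        rw [lintegral_finsetSum _ fun i _ => measurable_one.indicator (hS i)]
        simp_rw [lintegral_indicator_one (hS _)]
    _ ≤ ∫⁻ _, (D : ℝ≥0∞) ∂(stdGaussian E) := lintegral_mono hcount
    _ = D := by simp

lemma IsPolynomialCurve.lintegral_enorm_deriv_normalize_le (hG : IsPolynomialCurve G D)
    (hG0 : ∀ t, G t ≠ 0) :
    ∫⁻ t, ‖deriv (fun t => normalize (G t)) t‖ₑ ≤ ENNReal.ofReal (separationConst⁻¹ * D) :=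
  (lintegral_enorm_deriv_le_eVariationOn _).trans (hG.eVariationOn_normalize_le hG0)

end PolynomialCurve

section IsotropicPosition

open NormedSpace

variable {ι E : Type*} [Fintype ι] [NormedAddCommGroup E] [InnerProductSpace ℝ E]

lemma isUnit_one_add_neg_half_inner_self {w : E} (hw : ‖w‖ = 1) :
    IsUnit (1 + (-(1 / 2 : ℝ) • innerₛₗ ℝ w) w) := by
  simp only [LinearMap.smul_apply, innerₛₗ_apply_apply, real_inner_self_eq_norm_sq, hw]
  norm_num

/-- The linear map that halves the component along the unit vector `w`. -/
noncomputable def halving {w : E} (hw : ‖w‖ = 1) : E ≃ₗ[ℝ] E :=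
  LinearEquiv.dilatransvection (isUnit_one_add_neg_half_inner_self hw)

lemma halving_apply {w : E} (hw : ‖w‖ = 1) (x : E) :
    halving hw x = x - (1 / 2 * inner ℝ w x) • w := by
  simp [halving, LinearEquiv.dilatransvection.apply, sub_eq_add_neg]

lemma det_halving [FiniteDimensional ℝ E] {w : E} (hw : ‖w‖ = 1) :
    LinearMap.det (halving hw : E →ₗ[ℝ] E) = 1 / 2 := by
  rw [halving, LinearEquiv.dilatransvection.coe_toLinearMap, LinearMap.transvection.det,
    LinearMap.smul_apply, innerₛₗ_apply_apply, real_inner_self_eq_norm_sq, hw]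
  norm_num

lemma norm_halving_sq {w : E} (hw : ‖w‖ = 1) (x : E) :
    ‖halving hw x‖ ^ 2 = ‖x‖ ^ 2 - 3 / 4 * inner ℝ w x ^ 2 := by
  rw [halving_apply, norm_sub_sq_real, norm_smul, hw, real_inner_smul_right, real_inner_comm,
    mul_one, Real.norm_eq_abs, sq_abs]
  ring

lemma log_norm_halving_le {w : E} (hw : ‖w‖ = 1) {x : E} (hx : x ≠ 0) :
    Real.log ‖halving hw x‖ ≤ Real.log ‖x‖ - 3 / 8 * inner ℝ w (normalize x) ^ 2 := by
  have hx' : 0 < ‖x‖ := norm_pos_iff.2 hx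
  have hTx : 0 < ‖halving hw x‖ := norm_pos_iff.2 ((halving hw).map_ne_zero_iff.2 hx)
  have hratio : (‖halving hw x‖ / ‖x‖) ^ 2 = 1 - 3 / 4 * inner ℝ w (normalize x) ^ 2 := by
    rw [div_pow, norm_halving_sq, NormedSpace.normalize, real_inner_smul_right]
    field_simp
  have hlog := Real.log_le_sub_one_of_pos (pow_pos (div_pos hTx hx') 2)
  rw [Real.log_pow, Real.log_div hTx.ne' hx'.ne', hratio] at hlog
  push_cast at hlog
  linarith

variable {X : Type*} [TopologicalSpace X] [T2Space X] [MeasurableSpace X] [BorelSpace X]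
  {μ : Measure X} [IsProbabilityMeasure μ] {S : Set X} {e : X → ι → E}

lemma integrable_of_continuous_of_isCompact {f : X → ℝ} (hS : IsCompact S) (hμ : μ Sᶜ = 0)
    (hf : Continuous f) : Integrable f μ := by
  rw [← Measure.restrict_eq_self_of_ae_mem (mem_ae_iff.2 hμ : ∀ᵐ x ∂μ, x ∈ S)]
  exact hf.continuousOn.integrableOn_compact hS

lemma continuous_normalize_comp {Y : Type*} [TopologicalSpace Y] {f : Y → E} (hf : Continuous f)
    (hf0 : ∀ y, f y ≠ 0) : Continuous fun y => normalize (f y) :=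
  (hf.norm.inv₀ fun y => norm_ne_zero_iff.2 (hf0 y)).smul hf

/-- The potential `A ↦ ∫ ∑ log ‖A e_i‖ - log |det A|`, whose critical points put the vectors
`e_i` in radial isotropic position on average. -/
noncomputable def isotropicPotential (μ : Measure X) (e : X → ι → E) (A : E ≃ₗ[ℝ] E) : ℝ :=
  ∫ x, ∑ i, Real.log ‖A (e x i)‖ ∂μ - Real.log |LinearMap.det (A : E →ₗ[ℝ] E)|

lemma integrable_sum_log_norm [FiniteDimensional ℝ E] (hS : IsCompact S) (hμ : μ Sᶜ = 0)
    (he : ∀ i, Continuous fun x => e x i) (he0 : ∀ x i, e x i ≠ 0) (A : E ≃ₗ[ℝ] E) :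
    Integrable (fun x => ∑ i, Real.log ‖A (e x i)‖) μ :=
  integrable_of_continuous_of_isCompact hS hμ <| continuous_finsetSum _ fun i _ =>
    (A.toContinuousLinearEquiv.continuous.comp (he i)).norm.log fun x =>
      norm_ne_zero_iff.2 (A.map_ne_zero_iff.2 (he0 x i))

lemma integrable_sum_inner_normalize_sq [FiniteDimensional ℝ E] (hS : IsCompact S) (hμ : μ Sᶜ = 0)
    (he : ∀ i, Continuous fun x => e x i) (he0 : ∀ x i, e x i ≠ 0) (A : E ≃ₗ[ℝ] E) (w : E) :
    Integrable (fun x => ∑ i, inner ℝ w (normalize (A (e x i))) ^ 2) μ :=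
  integrable_of_continuous_of_isCompact hS hμ <| continuous_finsetSum _ fun i _ =>
    (continuous_const.inner (continuous_normalize_comp
      (A.toContinuousLinearEquiv.continuous.comp (he i))
      fun x => A.map_ne_zero_iff.2 (he0 x i))).pow 2

lemma isotropicPotential_trans_halving_le [FiniteDimensional ℝ E] (hS : IsCompact S)
    (hμ : μ Sᶜ = 0) (he : ∀ i, Continuous fun x => e x i) (he0 : ∀ x i, e x i ≠ 0)
    (A : E ≃ₗ[ℝ] E) {w : E} (hw : ‖w‖ = 1) :
    isotropicPotential μ e (A.trans (halving hw)) ≤ isotropicPotential μ e A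
      - 3 / 8 * ∫ x, ∑ i, inner ℝ w (normalize (A (e x i))) ^ 2 ∂μ + Real.log 2 := by
  have hA : LinearMap.det (A : E →ₗ[ℝ] E) ≠ 0 := (LinearEquiv.isUnit_det' A).ne_zero
  have hlogdet : Real.log |LinearMap.det (A.trans (halving hw) : E →ₗ[ℝ] E)|
      = Real.log |LinearMap.det (A : E →ₗ[ℝ] E)| - Real.log 2 := by
    rw [LinearEquiv.coe_trans, LinearMap.det_comp, det_halving, abs_mul,
      Real.log_mul (by norm_num) (abs_ne_zero.2 hA), abs_of_pos (by norm_num), one_div,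
      Real.log_inv]
    ring
  have hlog := integrable_sum_log_norm hS hμ he he0 A
  have hsq := integrable_sum_inner_normalize_sq hS hμ he he0 A w
  have hmono : ∫ x, ∑ i, Real.log ‖halving hw (A (e x i))‖ ∂μ
      ≤ ∫ x, (∑ i, Real.log ‖A (e x i)‖
        - 3 / 8 * ∑ i, inner ℝ w (normalize (A (e x i))) ^ 2) ∂μ := by
    refine integral_mono (integrable_sum_log_norm hS hμ he he0 (A.trans (halving hw)))
      (hlog.sub (hsq.const_mul _)) fun x => ?_
    simp only [Finset.mul_sum, ← Finset.sum_sub_distrib]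
    exact Finset.sum_le_sum fun i _ => log_norm_halving_le hw (A.map_ne_zero_iff.2 (he0 x i))
  rw [integral_sub hlog (hsq.const_mul _), integral_const_mul] at hmono
  simp only [isotropicPotential, hlogdet, LinearEquiv.trans_apply]
  linarith

variable [DecidableEq ι]

lemma abs_det_toBasis_le_prod_norm (b : OrthonormalBasis ι ℝ E) (v : ι → E) :
    |b.toBasis.det v| ≤ ∏ i, ‖v i‖ := by
  have : FiniteDimensional ℝ E := b.toBasis.finiteDimensional_of_finite
  have : Fact (Module.finrank ℝ E = Fintype.card ι) := ⟨Module.finrank_eq_card_basis b.toBasis⟩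
  set σ := Fintype.equivFin ι
  have h := (b.reindex σ).toBasis.orientation.abs_volumeForm_apply_le (v ∘ σ.symm)
  rwa [(b.reindex σ).toBasis.orientation.volumeForm_robust' (b.reindex σ),
    OrthonormalBasis.reindex_toBasis, Module.Basis.det_reindex, Function.comp_assoc,
    σ.symm_comp_self, Function.comp_id, Function.comp_def,
    Equiv.prod_comp σ.symm fun i => ‖v i‖] at h

lemma log_abs_det_add_le_sum_log_norm (b : OrthonormalBasis ι ℝ E) (A : E ≃ₗ[ℝ] E) {v : ι → E}
    (hv : b.toBasis.det v ≠ 0) :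
    Real.log |LinearMap.det (A : E →ₗ[ℝ] E)| + Real.log |b.toBasis.det v|
      ≤ ∑ i, Real.log ‖A (v i)‖ := by
  have : FiniteDimensional ℝ E := b.toBasis.finiteDimensional_of_finite
  have hA : LinearMap.det (A : E →ₗ[ℝ] E) ≠ 0 := (LinearEquiv.isUnit_det' A).ne_zero
  have hv0 : ∀ i, v i ≠ 0 := fun i h => hv (b.toBasis.det.map_coord_zero i h)
  rw [← Real.log_mul (abs_ne_zero.2 hA) (abs_ne_zero.2 hv), ← abs_mul, ← Module.Basis.det_comp,
    ← Real.log_prod fun i _ => norm_ne_zero_iff.2 (A.map_ne_zero_iff.2 (hv0 i))]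
  refine Real.log_le_log (abs_pos.2 ?_) (abs_det_toBasis_le_prod_norm b _)
  rw [Module.Basis.det_comp]
  exact mul_ne_zero hA hv

lemma integral_log_abs_det_le_isotropicPotential (b : OrthonormalBasis ι ℝ E) (hS : IsCompact S)
    (hμ : μ Sᶜ = 0) (he : ∀ i, Continuous fun x => e x i)
    (hdet : ∀ x, b.toBasis.det (e x) ≠ 0) (A : E ≃ₗ[ℝ] E) :
    ∫ x, Real.log |b.toBasis.det (e x)| ∂μ ≤ isotropicPotential μ e A := by
  have : FiniteDimensional ℝ E := b.toBasis.finiteDimensional_of_finite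
  have he0 : ∀ x i, e x i ≠ 0 := fun x i h => hdet x (b.toBasis.det.map_coord_zero i h)
  have hdetc : Continuous fun x => b.toBasis.det (e x) := by
    simp only [Module.Basis.det_apply]
    refine Continuous.matrix_det (continuous_matrix fun i j => ?_)
    simp only [Module.Basis.toMatrix_apply, OrthonormalBasis.coe_toBasis_repr_apply,
      OrthonormalBasis.repr_apply_apply]
    exact continuous_const.inner (he j)
  have hint : Integrable (fun x => Real.log |b.toBasis.det (e x)|) μ :=
    integrable_of_continuous_of_isCompact hS hμ (hdetc.abs.log fun x => abs_ne_zero.2 (hdet x))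
  have hmono : ∫ x, (Real.log |LinearMap.det (A : E →ₗ[ℝ] E)| + Real.log |b.toBasis.det (e x)|) ∂μ
      ≤ ∫ x, ∑ i, Real.log ‖A (e x i)‖ ∂μ :=
    integral_mono ((integrable_const _).add hint) (integrable_sum_log_norm hS hμ he he0 A)
      fun x => log_abs_det_add_le_sum_log_norm b A (hdet x)
  rw [integral_add (integrable_const _) hint, integral_const, probReal_univ, one_smul] at hmono
  exact le_sub_iff_add_le'.2 hmono

/-- Halving the component along `w` changes the potential by at most `log 2` minus `3 / 8` times
the left-hand side, which an almost minimising `A` does not allow to be negative by much. -/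
lemma exists_linearEquiv_integral_sum_inner_normalize_sq_le (b : OrthonormalBasis ι ℝ E)
    (hS : IsCompact S) (hμ : μ Sᶜ = 0) (he : ∀ i, Continuous fun x => e x i)
    (hdet : ∀ x, b.toBasis.det (e x) ≠ 0) :
    ∃ A : E ≃ₗ[ℝ] E, ∀ w, ‖w‖ = 1 →
      ∫ x, ∑ i, inner ℝ w (normalize (A (e x i))) ^ 2 ∂μ ≤ 2 := by
  have : FiniteDimensional ℝ E := b.toBasis.finiteDimensional_of_finite
  have he0 : ∀ x i, e x i ≠ 0 := fun x i h => hdet x (b.toBasis.det.map_coord_zero i h)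
  have hbdd : BddBelow (Set.range (isotropicPotential μ e)) := by
    refine ⟨∫ x, Real.log |b.toBasis.det (e x)| ∂μ, ?_⟩
    rintro _ ⟨A, rfl⟩
    exact integral_log_abs_det_le_isotropicPotential b hS hμ he hdet A
  obtain ⟨A, hA⟩ := exists_lt_of_ciInf_lt (f := isotropicPotential μ e)
    (a := iInf (isotropicPotential μ e) + 1 / 20) (by linarith)
  refine ⟨A, fun w hw => ?_⟩
  have hinf := ciInf_le hbdd (A.trans (halving hw))
  have hstep := isotropicPotential_trans_halving_le hS hμ he he0 A hw
  linarith [Real.log_two_lt_d9]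

lemma exists_linearEquiv_lintegral_sum_inner_normalize_sq_le (b : OrthonormalBasis ι ℝ E)
    (hS : IsCompact S) (hμ : μ Sᶜ = 0) (he : ∀ i, Continuous fun x => e x i)
    (hdet : ∀ x, b.toBasis.det (e x) ≠ 0) :
    ∃ A : E ≃ₗ[ℝ] E, ∀ w, ‖w‖ = 1 →
      ∫⁻ x, ∑ i, ENNReal.ofReal (inner ℝ w (normalize (A (e x i))) ^ 2) ∂μ ≤ 2 := by
  have : FiniteDimensional ℝ E := b.toBasis.finiteDimensional_of_finite
  have he0 : ∀ x i, e x i ≠ 0 := fun x i h => hdet x (b.toBasis.det.map_coord_zero i h)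
  obtain ⟨A, hA⟩ := exists_linearEquiv_integral_sum_inner_normalize_sq_le b hS hμ he hdet
  refine ⟨A, fun w hw => ?_⟩
  simp_rw [← ENNReal.ofReal_sum_of_nonneg fun _ _ => sq_nonneg _]
  rw [← ofReal_integral_eq_lintegral_ofReal
    (integrable_sum_inner_normalize_sq hS hμ he he0 A w)
    (.of_forall fun x => Finset.sum_nonneg fun _ _ => sq_nonneg _)]
  simpa using ENNReal.ofReal_le_ofReal (hA w hw)

end IsotropicPosition

section Monomials

variable {ι : Type*} [Fintype ι] {d : ℕ}

variable (d) in
/-- The vector of all monomials of degree at most `d` in each of the coordinates of `x`. -/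
noncomputable def monomialVector (x : ι → ℝ) : EuclideanSpace ℝ (ι → Fin (d + 1)) :=
  WithLp.toLp 2 fun α => ∏ i, x i ^ (α i : ℕ)

lemma monomialVector_ne_zero (x : ι → ℝ) : monomialVector d x ≠ 0 := by
  intro h
  simpa [monomialVector] using congrArg (fun z => z (0 : ι → Fin (d + 1))) h

variable [DecidableEq ι]

/-- The polynomial with coefficients `c`, of degree at most `d` in each variable. -/
noncomputable def polynomialOfCoeffs (c : EuclideanSpace ℝ (ι → Fin (d + 1))) : MvPolynomial ι ℝ :=
  ∑ α, MvPolynomial.monomial (Finsupp.equivFunOnFinite.symm fun i => (α i : ℕ)) (c α)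

lemma eval_polynomialOfCoeffs (c : EuclideanSpace ℝ (ι → Fin (d + 1))) (x : ι → ℝ) :
    MvPolynomial.eval x (polynomialOfCoeffs c) = inner ℝ (monomialVector d x) c := by
  rw [polynomialOfCoeffs, map_sum, PiLp.inner_apply]
  refine Finset.sum_congr rfl fun α _ => ?_
  rw [MvPolynomial.eval_monomial, Finsupp.prod_fintype _ _ fun _ => pow_zero _]
  rfl

lemma coeff_polynomialOfCoeffs (c : EuclideanSpace ℝ (ι → Fin (d + 1))) (α : ι → Fin (d + 1)) :
    (polynomialOfCoeffs c).coeff (Finsupp.equivFunOnFinite.symm fun i => (α i : ℕ)) = c α := by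
  have hinj : ∀ β : ι → Fin (d + 1), Finsupp.equivFunOnFinite.symm (fun i => (β i : ℕ)) =
      Finsupp.equivFunOnFinite.symm (fun i => (α i : ℕ)) ↔ β = α := fun β => by
    simp [funext_iff, Fin.ext_iff]
  simp [polynomialOfCoeffs, MvPolynomial.coeff_sum, MvPolynomial.coeff_monomial, hinj]

lemma degreeOf_polynomialOfCoeffs_le (c : EuclideanSpace ℝ (ι → Fin (d + 1))) (i : ι) :
    (polynomialOfCoeffs c).degreeOf i ≤ d := by
  refine (MvPolynomial.degreeOf_sum_le i _ _).trans (Finset.sup_le fun α _ => ?_)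
  refine MvPolynomial.degreeOf_le_iff.2 fun m hm => ?_
  rw [Finset.mem_singleton.1 (MvPolynomial.support_monomial_subset hm)]
  exact (α i).is_le

lemma totalDegree_polynomialOfCoeffs_le (c : EuclideanSpace ℝ (ι → Fin (d + 1))) :
    (polynomialOfCoeffs c).totalDegree ≤ Fintype.card ι * d := by
  refine MvPolynomial.totalDegree_finsetSum_le fun α _ =>
    (MvPolynomial.totalDegree_monomial_le _ _).trans ?_
  rw [Finsupp.sum_fintype _ _ fun _ => rfl]
  exact Finset.sum_le_card_nsmul _ _ _ fun i _ => (α i).is_le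

lemma contDiff_monomialVector : ContDiff ℝ 1 (monomialVector (ι := ι) d) := by
  rw [contDiff_euclidean]
  intro α
  simp only [monomialVector]
  fun_prop

lemma eq_zero_of_inner_monomialVector_eq_zero {y : ι → Fin (d + 1) → ℝ}
    (hy : ∀ i, Function.Injective (y i)) {c : EuclideanSpace ℝ (ι → Fin (d + 1))}
    (hc : ∀ β : ι → Fin (d + 1), inner ℝ (monomialVector d fun i => y i (β i)) c = 0) : c = 0 := by
  have hP : polynomialOfCoeffs c = 0 := by
    refine MvPolynomial.eq_zero_of_eval_zero_at_prod_finset _ (fun i => Finset.univ.image (y i))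
      (fun i => ?_) fun x hx => ?_
    · rw [Finset.card_image_of_injective _ (hy i), Finset.card_fin]
      exact Nat.lt_succ_of_le (degreeOf_polynomialOfCoeffs_le c i)
    · have hxy : ∀ i, ∃ b, y i b = x i := fun i => by simpa using hx i
      choose β hβ using hxy
      rw [eval_polynomialOfCoeffs, ← funext hβ]
      exact hc β
  ext α
  rw [← coeff_polynomialOfCoeffs c α, hP, MvPolynomial.coeff_zero, PiLp.zero_apply]

lemma det_monomialVector_ne_zero {y : ι → Fin (d + 1) → ℝ}
    (hy : ∀ i, Function.Injective (y i)) :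
    (EuclideanSpace.basisFun (ι → Fin (d + 1)) ℝ).toBasis.det
      (fun β => monomialVector d fun i => y i (β i)) ≠ 0 := by
  intro hdet
  rw [Module.Basis.det_apply, ← Matrix.exists_vecMul_eq_zero_iff] at hdet
  obtain ⟨c, hc, hvec⟩ := hdet
  refine hc ((WithLp.toLp_eq_zero 2).1 (eq_zero_of_inner_monomialVector_eq_zero hy fun β => ?_))
  exact congrFun hvec β

lemma isPolynomialCurve_map_monomialVector
    (A : EuclideanSpace ℝ (ι → Fin (d + 1)) →ₗ[ℝ] EuclideanSpace ℝ (ι → Fin (d + 1)))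
    (p v : ι → ℝ) :
    IsPolynomialCurve (fun t => A (monomialVector d (p + t • v))) (Fintype.card ι * d) := by
  intro w
  refine ⟨MvPolynomial.aeval (fun i => Polynomial.C (p i) + Polynomial.C (v i) * Polynomial.X)
    (polynomialOfCoeffs (LinearMap.adjoint A w)), ?_, fun t => ?_⟩
  · rw [← mul_one (Fintype.card ι * d)]
    refine MvPolynomial.aeval_natDegree_le _ (totalDegree_polynomialOfCoeffs_le _) _ fun i => ?_
    compute_degree
  · rw [← LinearMap.adjoint_inner_right, ← eval_polynomialOfCoeffs, MvPolynomial.aeval_def,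
      MvPolynomial.polynomial_eval_eval₂]
    exact congrArg₂ (MvPolynomial.eval₂ · · _) (by ext; simp) (by ext; simp [mul_comm t])

end Monomials

section BalancedMap

open NormedSpace

variable {ι : Type*}

/-- The half-open unit cube with corner `k ∈ ℤ^ι`, in `ι → ℝ` with its product measure. -/
def unitCube (k : ι → ℤ) : Set (ι → ℝ) :=
  Set.univ.pi fun i => Set.Ico (k i : ℝ) (k i + 1)

/-- The cube of side `1 / (d + 1)` with the same corner `k` as `unitCube k`. -/
def gridCell (d : ℕ) (k : ι → ℤ) : Set (ι → ℝ) :=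
  Set.univ.pi fun i => Set.Ico (k i : ℝ) (k i + ((d : ℝ) + 1)⁻¹)

/-- The translations that carry `gridCell d k` to the `(d + 1) ^ card ι` cells of `unitCube k`. -/
noncomputable def gridShift {d : ℕ} (β : ι → Fin (d + 1)) : ι → ℝ :=
  fun i => ((β i : ℕ) : ℝ) * ((d : ℝ) + 1)⁻¹

lemma gridCell_subset_Icc (d : ℕ) (k : ι → ℤ) :
    gridCell d k ⊆ Set.Icc (fun i => (k i : ℝ)) (fun i => k i + 1) := by
  have hd : ((d : ℝ) + 1)⁻¹ ≤ 1 := inv_le_one_of_one_le₀ (by norm_cast; omega)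
  exact fun x hx => ⟨fun i => (hx i trivial).1, fun i => by linarith [(hx i trivial).2]⟩

lemma exists_sub_gridShift_mem_gridCell (d : ℕ) {k : ι → ℤ} {x : ι → ℝ} (hx : x ∈ unitCube k) :
    ∃ β : ι → Fin (d + 1), x - gridShift β ∈ gridCell d k := by
  have hd : (0 : ℝ) < (d : ℝ) + 1 := by positivity
  have hx0 : ∀ i, 0 ≤ (x i - k i) * ((d : ℝ) + 1) := fun i =>
    mul_nonneg (sub_nonneg.2 (hx i trivial).1) hd.le
  have hfloor : ∀ i, ⌊(x i - k i) * ((d : ℝ) + 1)⌋₊ < d + 1 := fun i => by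
    rw [Nat.floor_lt (hx0 i)]
    push_cast
    exact mul_lt_of_lt_one_left hd (sub_left_lt_of_lt_add (hx i trivial).2)
  refine ⟨fun i => ⟨⌊(x i - k i) * ((d : ℝ) + 1)⌋₊, hfloor i⟩, fun i _ => ?_⟩
  have hlower := mul_le_mul_of_nonneg_right (Nat.floor_le (hx0 i)) (inv_nonneg.2 hd.le)
  have hupper := mul_lt_mul_of_pos_right (Nat.lt_floor_add_one ((x i - k i) * ((d : ℝ) + 1)))
    (inv_pos.2 hd)
  rw [mul_inv_cancel_right₀ hd.ne'] at hlower hupper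
  simp only [Pi.sub_apply, gridShift]
  constructor <;> linarith

lemma measurableSet_gridCell [Countable ι] (d : ℕ) (k : ι → ℤ) : MeasurableSet (gridCell d k) :=
  MeasurableSet.univ_pi fun _ => measurableSet_Ico

variable [Fintype ι]

lemma volume_gridCell (d : ℕ) (k : ι → ℤ) :
    volume (gridCell d k) = (((d : ℝ≥0∞) + 1) ^ Fintype.card ι)⁻¹ := by
  have hd : (0 : ℝ) < (d : ℝ) + 1 := by positivity
  simp only [gridCell, volume_pi_pi, Real.volume_Ico, add_sub_cancel_left, Finset.prod_const,
    Finset.card_univ, ENNReal.ofReal_inv_of_pos hd, ENNReal.ofReal_add d.cast_nonneg zero_le_one,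
    ENNReal.ofReal_natCast, ENNReal.ofReal_one, ENNReal.inv_pow]

lemma setLIntegral_unitCube_le_sum [DecidableEq ι] (d : ℕ) (k : ι → ℤ) (g : (ι → ℝ) → ℝ≥0∞) :
    ∫⁻ x in unitCube k, g x
      ≤ ∑ β : ι → Fin (d + 1), ∫⁻ x in gridCell d k, g (x + gridShift β) := by
  calc ∫⁻ x in unitCube k, g x
      ≤ ∫⁻ x in ⋃ β : ι → Fin (d + 1), (· - gridShift β) ⁻¹' gridCell d k, g x :=
        lintegral_mono_set fun x hx => Set.mem_iUnion.2 (exists_sub_gridShift_mem_gridCell d hx)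
    _ ≤ ∑ β : ι → Fin (d + 1), ∫⁻ x in (· - gridShift β) ⁻¹' gridCell d k, g x := by
        rw [← tsum_fintype (L := .unconditional _)]
        exact lintegral_iUnion_le _ _
    _ = ∑ β : ι → Fin (d + 1), ∫⁻ x in gridCell d k, g (x + gridShift β) := by
        refine Finset.sum_congr rfl fun β _ => ?_
        have h := (measurePreserving_sub_right volume (gridShift β)).setLIntegral_comp_preimage_emb
          (measurableEmbedding_subRight _) (fun x => g (x + gridShift β)) (gridCell d k)
        simpa only [sub_add_cancel] using h

/-- The measure that distributes the mass `M k` uniformly over `gridCell d k`, for each `k ∈ K`. -/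
noncomputable def gridMeasure (d : ℕ) (K : Finset (ι → ℤ)) (M : (ι → ℤ) → ℝ≥0∞) :
    Measure (ι → ℝ) :=
  ∑ k ∈ K, M k • ProbabilityTheory.cond volume (gridCell d k)

variable {K : Finset (ι → ℤ)} {M : (ι → ℤ) → ℝ≥0∞}

lemma isProbabilityMeasure_gridMeasure (d : ℕ) (hM : ∑ k ∈ K, M k = 1) :
    IsProbabilityMeasure (gridMeasure d K M) := by
  have hcell : ∀ k : ι → ℤ, IsProbabilityMeasure
      (ProbabilityTheory.cond volume (gridCell d k)) := fun k => by
    refine ProbabilityTheory.cond_isProbabilityMeasure_of_finite ?_ ?_ <;>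
      simp [volume_gridCell]
  constructor
  simpa [gridMeasure, Measure.finsetSum_apply] using hM

lemma gridMeasure_compl_eq_zero (d : ℕ) (K : Finset (ι → ℤ)) (M : (ι → ℤ) → ℝ≥0∞) :
    gridMeasure d K M (⋃ k ∈ K, Set.Icc (fun i => (k i : ℝ)) (fun i => k i + 1))ᶜ = 0 := by
  rw [gridMeasure, Measure.finsetSum_apply]
  refine Finset.sum_eq_zero fun k hk => ?_
  have hdisj : gridCell d k ∩
      (⋃ k ∈ K, Set.Icc (fun i => (k i : ℝ)) (fun i => (k i : ℝ) + 1))ᶜ = ∅ :=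
    Set.sdiff_eq_empty.2 ((gridCell_subset_Icc d k).trans (Set.subset_biUnion_of_mem
      (u := fun k : ι → ℤ => Set.Icc (fun i => (k i : ℝ)) (fun i => (k i : ℝ) + 1)) hk))
  rw [Measure.smul_apply, ProbabilityTheory.cond_apply (measurableSet_gridCell d k), hdisj,
    measure_empty, mul_zero, smul_zero]

lemma mul_setLIntegral_unitCube_le [DecidableEq ι] (d : ℕ) {k : ι → ℤ} (hk : k ∈ K)
    {g : (ι → ℝ) → ℝ≥0∞} (hg : Measurable g) :
    ((d : ℝ≥0∞) + 1) ^ Fintype.card ι * (M k * ∫⁻ x in unitCube k, g x)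
      ≤ ∫⁻ x, ∑ β : ι → Fin (d + 1), g (x + gridShift β) ∂(gridMeasure d K M) := by
  calc ((d : ℝ≥0∞) + 1) ^ Fintype.card ι * (M k * ∫⁻ x in unitCube k, g x)
      ≤ ((d : ℝ≥0∞) + 1) ^ Fintype.card ι *
          (M k * ∫⁻ x in gridCell d k, ∑ β : ι → Fin (d + 1), g (x + gridShift β)) := by
        rw [lintegral_finsetSum _ fun β _ => by fun_prop]
        gcongr
        exact setLIntegral_unitCube_le_sum d k g
    _ = ∫⁻ x, ∑ β : ι → Fin (d + 1), g (x + gridShift β)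
          ∂(M k • ProbabilityTheory.cond volume (gridCell d k)) := by
        rw [lintegral_smul_measure, ProbabilityTheory.cond, lintegral_smul_measure,
          volume_gridCell, inv_inv, smul_eq_mul, smul_eq_mul, mul_left_comm]
    _ ≤ ∫⁻ x, ∑ β : ι → Fin (d + 1), g (x + gridShift β) ∂(gridMeasure d K M) := by
        rw [gridMeasure, lintegral_finsetSum_measure]
        exact Finset.single_le_sum (f := fun k => ∫⁻ x, ∑ β : ι → Fin (d + 1), g (x + gridShift β)
          ∂(M k • ProbabilityTheory.cond volume (gridCell d k))) (fun _ _ => zero_le) hk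

lemma contDiff_normalize_comp {F E : Type*} [NormedAddCommGroup F] [NormedSpace ℝ F]
    [NormedAddCommGroup E] [InnerProductSpace ℝ E] {n : WithTop ℕ∞} {f : F → E}
    (hf : ContDiff ℝ n f) (hf0 : ∀ x, f x ≠ 0) : ContDiff ℝ n fun x => normalize (f x) :=
  ((hf.norm ℝ hf0).inv fun x => norm_ne_zero_iff.2 (hf0 x)).smul hf

lemma hasDerivAt_comp_add_smul {F E : Type*} [NormedAddCommGroup F] [NormedSpace ℝ F]
    [NormedAddCommGroup E] [NormedSpace ℝ E] {u : F → E} (hu : Differentiable ℝ u) (x v : F)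
    (t : ℝ) : HasDerivAt (fun t : ℝ => u (x + t • v)) (fderiv ℝ u (x + t • v) v) t := by
  have hline : HasDerivAt (fun t : ℝ => x + t • v) v t := by
    simpa using ((hasDerivAt_id t).smul_const v).const_add x
  exact (hu _).hasFDerivAt.comp_hasDerivAt t hline

lemma det_monomialVector_add_gridShift_ne_zero [DecidableEq ι] (d : ℕ) (x : ι → ℝ) :
    (EuclideanSpace.basisFun (ι → Fin (d + 1)) ℝ).toBasis.det
      (fun β => monomialVector d (x + gridShift β)) ≠ 0 := by
  refine det_monomialVector_ne_zero (y := fun i b => x i + ((b : ℕ) : ℝ) * ((d : ℝ) + 1)⁻¹)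
    fun i b b' h => ?_
  exact Fin.ext (Nat.cast_injective
    (mul_right_cancel₀ (by positivity : ((d : ℝ) + 1)⁻¹ ≠ 0) (add_left_cancel h)))

/-- Put the vectors of monomials at the points of the subgrids of the cubes in radial isotropic
position: the number of these points in a cube is the dimension of the space of polynomials. -/
lemma exists_balanced_map [DecidableEq ι] (d : ℕ) (hM : ∑ k ∈ K, M k = 1) :
    ∃ u : (ι → ℝ) → EuclideanSpace ℝ (ι → Fin (d + 1)), ContDiff ℝ 1 u ∧ (∀ x, ‖u x‖ = 1) ∧
      (∀ k ∈ K, ∀ w, ‖w‖ = 1 → ((d : ℝ≥0∞) + 1) ^ Fintype.card ι *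
        (M k * ∫⁻ x in unitCube k, ENNReal.ofReal (inner ℝ w (u x) ^ 2)) ≤ 2) ∧
      ∀ p v : ι → ℝ, ∫⁻ t : ℝ, ‖fderiv ℝ u (p + t • v) v‖ₑ
        ≤ ENNReal.ofReal (separationConst⁻¹ * (Fintype.card ι * d : ℕ)) := by
  have := isProbabilityMeasure_gridMeasure d hM
  obtain ⟨A, hA⟩ := exists_linearEquiv_lintegral_sum_inner_normalize_sq_le
    (EuclideanSpace.basisFun (ι → Fin (d + 1)) ℝ)
    (K.isCompact_biUnion fun k _ => isCompact_Icc) (gridMeasure_compl_eq_zero d K M)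
    (e := fun x β => monomialVector d (x + gridShift β))
    (fun β => contDiff_monomialVector.continuous.comp (continuous_add_const _))
    (det_monomialVector_add_gridShift_ne_zero d)
  have hA0 : ∀ x : ι → ℝ, A (monomialVector d x) ≠ 0 := fun x =>
    A.map_ne_zero_iff.2 (monomialVector_ne_zero x)
  have hu : ContDiff ℝ 1 fun x : ι → ℝ => normalize (A (monomialVector d x)) :=
    contDiff_normalize_comp (A.toContinuousLinearEquiv.contDiff.comp contDiff_monomialVector) hA0
  refine ⟨_, hu, fun x => norm_normalize (hA0 x), fun k hk w hw => ?_, fun p v => ?_⟩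
  · exact (mul_setLIntegral_unitCube_le d hk
      (continuous_const.inner hu.continuous |>.pow 2).measurable.ennreal_ofReal).trans (hA w hw)
  · simp_rw [← (hasDerivAt_comp_add_smul (hu.differentiable one_ne_zero) p v _).deriv]
    have hcurve := isPolynomialCurve_map_monomialVector A.toLinearMap p v
    exact hcurve.lintegral_enorm_deriv_normalize_le fun t => hA0 _

end BalancedMap

section Visibility

variable {F E : Type*} [NormedAddCommGroup F] [NormedSpace ℝ F]
  [NormedAddCommGroup E] [NormedSpace ℝ E] {u : F → E}

lemma enorm_add_sub_le_lintegral_enorm_fderiv (hu : ContDiff ℝ 1 u) (x h : F) :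
    ‖u (x + h) - u x‖ₑ ≤ ∫⁻ t in Set.Icc (0 : ℝ) 1, ‖fderiv ℝ u (x + t • h) h‖ₑ := by
  have hline : ContDiff ℝ 1 fun t : ℝ => u (x + t • h) :=
    hu.comp (contDiff_const.add (contDiff_id.smul contDiff_const))
  have hftc := enorm_sub_le_lintegral_deriv_of_contDiffOn_Icc (hline.contDiffOn (s := Set.Icc 0 1))
    zero_le_one
  simpa only [(hasDerivAt_comp_add_smul (hu.differentiable one_ne_zero) x h _).deriv, one_smul,
    zero_smul, add_zero] using hftc

lemma continuous_enorm_fderiv_apply (hu : ContDiff ℝ 1 u) (h : F) :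
    Continuous fun x => ‖fderiv ℝ u x h‖ₑ :=
  ((hu.continuous_fderiv one_ne_zero).clm_apply continuous_const).enorm

variable [MeasurableSpace F] [BorelSpace F]

lemma setLIntegral_enorm_fderiv_sum_le {ι : Type*} [Fintype ι] {μ : Measure F}
    (hu : ContDiff ℝ 1 u) (Q : Set F) (c : ι → ℝ) (V : ι → F) :
    ∫⁻ x in Q, ‖fderiv ℝ u x (∑ j, c j • V j)‖ₑ ∂μ
      ≤ ∑ j, ‖c j‖ₑ * ∫⁻ x in Q, ‖fderiv ℝ u x (V j)‖ₑ ∂μ := by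
  have hmeas : ∀ h : F, Measurable fun x => ‖fderiv ℝ u x h‖ₑ := fun h =>
    (continuous_enorm_fderiv_apply hu h).measurable
  simp_rw [← lintegral_const_mul _ (hmeas _)]
  rw [← lintegral_finsetSum _ fun j _ => (hmeas _).const_mul _]
  refine lintegral_mono fun x => ?_
  simp only [map_sum, map_smul, ← enorm_smul]
  exact enorm_sum_le _ _

lemma setLIntegral_enorm_add_sub_le {μ : Measure F} [SFinite μ] [μ.IsAddRightInvariant]
    (hu : ContDiff ℝ 1 u) {P Q : Set F} {h : F}
    (hPQ : ∀ x ∈ P, ∀ t ∈ Set.Icc (0 : ℝ) 1, x + t • h ∈ Q) :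
    ∫⁻ x in P, ‖u (x + h) - u x‖ₑ ∂μ ≤ ∫⁻ x in Q, ‖fderiv ℝ u x h‖ₑ ∂μ := by
  calc ∫⁻ x in P, ‖u (x + h) - u x‖ₑ ∂μ
      ≤ ∫⁻ x in P, (∫⁻ t in Set.Icc (0 : ℝ) 1, ‖fderiv ℝ u (x + t • h) h‖ₑ) ∂μ :=
        lintegral_mono fun x => enorm_add_sub_le_lintegral_enorm_fderiv hu x h
    _ = ∫⁻ t in Set.Icc (0 : ℝ) 1, ∫⁻ x in P, ‖fderiv ℝ u (x + t • h) h‖ₑ ∂μ := by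
        refine lintegral_lintegral_swap (Continuous.aemeasurable ?_)
        exact (continuous_enorm_fderiv_apply hu h).comp
          (f := fun z : F × ℝ => z.1 + z.2 • h) (by fun_prop)
    _ ≤ ∫⁻ _ in Set.Icc (0 : ℝ) 1, ∫⁻ x in Q, ‖fderiv ℝ u x h‖ₑ ∂μ := by
        refine setLIntegral_mono measurable_const fun t ht => ?_
        rw [← (measurePreserving_add_right μ (t • h)).setLIntegral_comp_preimage_emb
          (measurableEmbedding_addRight _) (fun x => ‖fderiv ℝ u x h‖ₑ) Q]
        exact lintegral_mono_set fun x hx => hPQ x hx t ht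
    _ = ∫⁻ x in Q, ‖fderiv ℝ u x h‖ₑ ∂μ := by
        rw [setLIntegral_const, Real.volume_Icc]
        simp

lemma exists_mem_setLIntegral_le_mul {X Y : Type*} [MeasurableSpace X] [MeasurableSpace Y]
    {μ : Measure X} {ν : Measure Y} [SFinite μ] [SFinite ν] {P : Set X} (hP0 : μ P ≠ 0)
    (hP : μ P ≠ ∞) {B : Set Y} {f : X → Y → ℝ≥0∞} (hf : Measurable (Function.uncurry f)) {ε : ℝ≥0∞}
    (h : ∀ y ∈ B, ∫⁻ x in P, f x y ∂μ ≤ ε * μ P) :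
    ∃ x ∈ P, ∫⁻ y in B, f x y ∂ν ≤ ε * ν B := by
  obtain ⟨x, hxP, hx⟩ := exists_le_setLAverage (f := fun x => ∫⁻ y in B, f x y ∂ν) hP0 hP
    hf.lintegral_prod_right'.aemeasurable
  refine ⟨x, hxP, hx.trans ?_⟩
  rw [setLAverage_eq, ENNReal.div_le_iff hP0 hP, lintegral_lintegral_swap hf.aemeasurable,
    mul_right_comm, ← setLIntegral_const]
  exact setLIntegral_mono measurable_const h

lemma ofReal_abs_det_mul_setLIntegral_le [FiniteDimensional ℝ F] (μ : Measure F)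
    [μ.IsAddHaarMeasure] (L : F →L[ℝ] F) (x : F) {B Q : Set F} (hB : MeasurableSet B)
    (hBQ : ∀ c ∈ B, x + L c ∈ Q) (g : F → ℝ≥0∞) :
    ENNReal.ofReal |L.det| * ∫⁻ c in B, g (x + L c) ∂μ ≤ ∫⁻ y in Q, g y ∂μ := by
  rcases eq_or_ne L.det 0 with hdet | hdet
  · simp [hdet]
  have hinj : Function.Injective L := (L.toContinuousLinearEquivOfDetNeZero hdet).injective
  rw [← lintegral_const_mul' _ _ ENNReal.ofReal_ne_top,
    ← lintegral_image_eq_lintegral_abs_det_fderiv_mul μ hB (f := fun c => x + L c)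
      (fun c _ => (L.hasFDerivAt.const_add x).hasFDerivWithinAt)
      (fun c _ c' _ h => hinj (add_left_cancel h))]
  exact lintegral_mono_set (Set.image_subset_iff.2 hBQ)

end Visibility

section UnitCube

variable {ι E : Type*} [Fintype ι] [NormedAddCommGroup E] [InnerProductSpace ℝ E]

lemma one_le_inner_sq_add_norm_sub {w y : E} (hw : ‖w‖ = 1) (hy : ‖y‖ = 1) :
    1 ≤ inner ℝ w y ^ 2 + 2 * ‖y - w‖ := by
  have hsq : ‖y - w‖ ^ 2 = 2 - 2 * inner ℝ w y := by
    rw [norm_sub_sq_real, hw, hy, real_inner_comm]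
    ring
  have hle : ‖y - w‖ ≤ 2 := by
    linarith [norm_sub_le y w]
  have hinner : inner ℝ w y = 1 - ‖y - w‖ ^ 2 / 2 := by linarith
  rw [hinner]
  nlinarith [norm_nonneg (y - w), sq_nonneg (‖y - w‖ ^ 2)]

lemma measure_univ_le_two_mul_lintegral_inner_sq {Y : Type*} [MeasurableSpace Y]
    {ν : Measure Y} [IsFiniteMeasure ν] {f : Y → E} {w : E} (hf : ∀ y, ‖f y‖ = 1) (hw : ‖w‖ = 1)
    (hmeas : Measurable fun y => ‖f y - w‖ₑ)
    (h : ∫⁻ y, ‖f y - w‖ₑ ∂ν ≤ 4⁻¹ * ν Set.univ) :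
    ν Set.univ ≤ 2 * ∫⁻ y, ENNReal.ofReal (inner ℝ w (f y) ^ 2) ∂ν := by
  have hpoint : ∀ y, 1 ≤ ENNReal.ofReal (inner ℝ w (f y) ^ 2) + 2 * ‖f y - w‖ₑ := fun y => by
    rw [← ofReal_norm, ← ENNReal.ofReal_ofNat 2, ← ENNReal.ofReal_mul zero_le_two,
      ← ENNReal.ofReal_add (sq_nonneg _) (by positivity), ENNReal.one_le_ofReal]
    exact one_le_inner_sq_add_norm_sub hw (hf y)
  have hsum : ν Set.univ ≤ ∫⁻ y, ENNReal.ofReal (inner ℝ w (f y) ^ 2) ∂ν + ν Set.univ / 2 :=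
    calc ν Set.univ = ∫⁻ _, 1 ∂ν := by rw [lintegral_one]
      _ ≤ ∫⁻ y, (ENNReal.ofReal (inner ℝ w (f y) ^ 2) + 2 * ‖f y - w‖ₑ) ∂ν :=
        lintegral_mono hpoint
      _ = ∫⁻ y, ENNReal.ofReal (inner ℝ w (f y) ^ 2) ∂ν + 2 * ∫⁻ y, ‖f y - w‖ₑ ∂ν := by
        rw [lintegral_add_right _ (hmeas.const_mul 2), lintegral_const_mul _ hmeas]
      _ ≤ _ := by
        grw [h]
        rw [← mul_assoc, ENNReal.div_eq_inv_mul]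
        gcongr
        rw [← ENNReal.toReal_le_toReal (by finiteness) (by finiteness)]
        norm_num
  rw [mul_comm, ← ENNReal.div_le_iff two_ne_zero ENNReal.ofNat_ne_top]
  refine (ENNReal.add_le_add_iff_right (a := ν Set.univ / 2) (by finiteness)).1 ?_
  rwa [ENNReal.add_halves]

lemma add_mem_unitCube {k : ι → ℤ} {x h : ι → ℝ}
    (hx : x ∈ Metric.ball (fun i => (k i : ℝ) + 1 / 2) (1 / 4)) (hh : ‖h‖ ≤ 1 / 4) :
    x + h ∈ unitCube k := by
  intro i _
  have hxi := abs_lt.1 ((dist_pi_lt_iff (by norm_num)).1 hx i)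
  have hhi := abs_le.1 ((norm_le_pi_norm h i).trans hh)
  constructor <;> simp only [Pi.add_apply] <;> linarith

variable {u : (ι → ℝ) → E}

lemma exists_setLIntegral_enorm_add_sub_le (hu : ContDiff ℝ 1 u) (k : ι → ℤ)
    (L : (ι → ℝ) →L[ℝ] ι → ℝ) {B : Set (ι → ℝ)} (hL : ∀ c ∈ B, ‖L c‖ ≤ 1 / 4)
    (hvar : ∀ c ∈ B, ∫⁻ x in unitCube k, ‖fderiv ℝ u x (L c)‖ₑ
      ≤ ENNReal.ofReal ((1 / 2) ^ Fintype.card ι / 4)) :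
    ∃ x ∈ Metric.ball (fun i => (k i : ℝ) + 1 / 2) (1 / 4),
      ∫⁻ c in B, ‖u (x + L c) - u x‖ₑ ≤ 4⁻¹ * volume B := by
  have hvol : volume (Metric.ball (fun i => (k i : ℝ) + 1 / 2) (1 / 4))
      = ENNReal.ofReal ((1 / 2) ^ Fintype.card ι) := by
    rw [Real.volume_pi_ball _ (by norm_num)]
    norm_num
  have huc := hu.continuous
  have hmeas : Continuous fun z : (ι → ℝ) × (ι → ℝ) => ‖u (z.1 + L z.2) - u z.1‖ₑ := by fun_prop
  refine exists_mem_setLIntegral_le_mul (μ := volume) (ν := volume)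
    (f := fun x c => ‖u (x + L c) - u x‖ₑ) (by rw [hvol]; simp) (by rw [hvol]; simp)
    hmeas.measurable fun c hc => ?_
  calc ∫⁻ x in Metric.ball (fun i => (k i : ℝ) + 1 / 2) (1 / 4), ‖u (x + L c) - u x‖ₑ
      ≤ ∫⁻ x in unitCube k, ‖fderiv ℝ u x (L c)‖ₑ := by
        refine setLIntegral_enorm_add_sub_le hu fun x hx _ ht => add_mem_unitCube hx ?_
        rw [norm_smul, Real.norm_of_nonneg ht.1]
        exact (mul_le_of_le_one_left (norm_nonneg _) ht.2).trans (hL c hc)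
    _ ≤ ENNReal.ofReal ((1 / 2) ^ Fintype.card ι / 4) := hvar c hc
    _ = 4⁻¹ * volume (Metric.ball (fun i => (k i : ℝ) + 1 / 2) (1 / 4)) := by
        rw [hvol, ENNReal.ofReal_div_of_pos (by norm_num), ENNReal.ofReal_ofNat,
          ENNReal.div_eq_inv_mul]

/-- The side, relative to `s`, of the boxes on which `visibilityScale_pow_mul_abs_det_le` compares
a map to a constant. -/
noncomputable def visibilityScale (n : ℕ) : ℝ :=
  (1 / 2) ^ n / 4 / (n + 1)

lemma visibilityScale_pos (n : ℕ) : 0 < visibilityScale n := by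
  unfold visibilityScale
  positivity

lemma mul_visibilityScale_le (n : ℕ) : n * visibilityScale n ≤ (1 / 2) ^ n / 4 := by
  rw [visibilityScale, mul_div_left_comm]
  exact mul_le_of_le_one_right (by positivity) (div_le_one_of_le₀ (by linarith) (by positivity))

variable {s : ι → ℝ} {V : ι → ι → ℝ}

lemma volume_Icc_visibilityScale_div (hs : ∀ j, 1 ≤ s j) :
    volume (Set.Icc 0 fun j => visibilityScale (Fintype.card ι) / s j)
      = ENNReal.ofReal (visibilityScale (Fintype.card ι) ^ Fintype.card ι / ∏ j, s j) := by
  have hpos := visibilityScale_pos (Fintype.card ι)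
  simp only [Real.volume_Icc_pi, Pi.zero_apply, sub_zero]
  rw [← ENNReal.ofReal_prod_of_nonneg fun j _ => (div_pos hpos (one_pos.trans_le (hs j))).le,
    Finset.prod_div_distrib, Finset.prod_const, Finset.card_univ]

lemma norm_sum_smul_le_of_mem_Icc (hV : ∀ j, ‖V j‖ ≤ 1) (hs : ∀ j, 1 ≤ s j) {c : ι → ℝ}
    (hc : c ∈ Set.Icc 0 fun j => visibilityScale (Fintype.card ι) / s j) :
    ‖∑ j, c j • V j‖ ≤ 1 / 4 := by
  have hpos := visibilityScale_pos (Fintype.card ι)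
  have hterm : ∀ j, ‖c j • V j‖ ≤ visibilityScale (Fintype.card ι) := fun j => by
    rw [norm_smul, Real.norm_of_nonneg (hc.1 j)]
    calc c j * ‖V j‖ ≤ c j := mul_le_of_le_one_right (hc.1 j) (hV j)
      _ ≤ visibilityScale (Fintype.card ι) / s j := hc.2 j
      _ ≤ visibilityScale (Fintype.card ι) := div_le_self hpos.le (hs j)
  calc ‖∑ j, c j • V j‖ ≤ Fintype.card ι * visibilityScale (Fintype.card ι) := by
        simpa using norm_sum_le_of_le Finset.univ fun j _ => hterm j
    _ ≤ (1 / 2) ^ Fintype.card ι / 4 := mul_visibilityScale_le _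
    _ ≤ 1 / 4 := by
        gcongr
        exact pow_le_one₀ (by norm_num) (by norm_num)

lemma setLIntegral_enorm_fderiv_sum_smul_le (hu : ContDiff ℝ 1 u) {Q : Set (ι → ℝ)}
    (hs : ∀ j, 1 ≤ s j) (hS : ∀ j, ∫⁻ x in Q, ‖fderiv ℝ u x (V j)‖ₑ ≤ ENNReal.ofReal (s j))
    {c : ι → ℝ} (hc : c ∈ Set.Icc 0 fun j => visibilityScale (Fintype.card ι) / s j) :
    ∫⁻ x in Q, ‖fderiv ℝ u x (∑ j, c j • V j)‖ₑ
      ≤ ENNReal.ofReal ((1 / 2) ^ Fintype.card ι / 4) := by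
  have hterm : ∀ j, ‖c j‖ₑ * ∫⁻ x in Q, ‖fderiv ℝ u x (V j)‖ₑ
      ≤ ENNReal.ofReal (visibilityScale (Fintype.card ι)) := fun j => by
    rw [Real.enorm_eq_ofReal (hc.1 j)]
    grw [hS j]
    rw [← ENNReal.ofReal_mul (hc.1 j)]
    exact ENNReal.ofReal_le_ofReal ((le_div_iff₀ (one_pos.trans_le (hs j))).1 (hc.2 j))
  calc ∫⁻ x in Q, ‖fderiv ℝ u x (∑ j, c j • V j)‖ₑ
      ≤ ∑ j, ‖c j‖ₑ * ∫⁻ x in Q, ‖fderiv ℝ u x (V j)‖ₑ :=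
        setLIntegral_enorm_fderiv_sum_le hu Q c V
    _ ≤ ∑ _ : ι, ENNReal.ofReal (visibilityScale (Fintype.card ι)) :=
        Finset.sum_le_sum fun j _ => hterm j
    _ = ENNReal.ofReal (Fintype.card ι * visibilityScale (Fintype.card ι)) := by
        rw [Finset.sum_const, Finset.card_univ, nsmul_eq_mul,
          ENNReal.ofReal_mul (Nat.cast_nonneg _), ENNReal.ofReal_natCast]
    _ ≤ ENNReal.ofReal ((1 / 2) ^ Fintype.card ι / 4) :=
        ENNReal.ofReal_le_ofReal (mul_visibilityScale_le _)

/-- Translating by a box in the directions `V j` of sides inversely proportional to the variations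
`s j` of `u` hardly moves `u`. Hence `u` is nearly constant on a parallelepiped of volume about
`|det V| / ∏ s`, which the bound on the integral of `⟪w, u⟫ ^ 2` forbids if it is too large. -/
lemma visibilityScale_pow_mul_abs_det_le [DecidableEq ι] (hu : ContDiff ℝ 1 u)
    (hu1 : ∀ x, ‖u x‖ = 1) {k : ι → ℤ} {τ : ℝ} (hτ0 : 0 ≤ τ) (hτ : ∀ w, ‖w‖ = 1 →
      ∫⁻ x in unitCube k, ENNReal.ofReal (inner ℝ w (u x) ^ 2) ≤ ENNReal.ofReal τ)
    (hV : ∀ j, ‖V j‖ ≤ 1) (hs : ∀ j, 1 ≤ s j)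
    (hS : ∀ j, ∫⁻ x in unitCube k, ‖fderiv ℝ u x (V j)‖ₑ ≤ ENNReal.ofReal (s j)) :
    visibilityScale (Fintype.card ι) ^ Fintype.card ι * |(Matrix.of fun i j => V j i).det|
      ≤ 2 * τ * ∏ j, s j := by
  set L : (ι → ℝ) →L[ℝ] ι → ℝ :=
    (Matrix.toLin' (Matrix.of fun i j => V j i)).toContinuousLinearMap with hL
  set B : Set (ι → ℝ) := Set.Icc 0 fun j => visibilityScale (Fintype.card ι) / s j
  have hLV : ∀ c, L c = ∑ j, c j • V j := fun c => by
    ext i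
    simp [hL, Matrix.mulVec, dotProduct, mul_comm]
  have hLdet : L.det = (Matrix.of fun i j => V j i).det := LinearMap.det_toLin' _
  have hB4 : ∀ c ∈ B, ‖L c‖ ≤ 1 / 4 := fun c hc => hLV c ▸ norm_sum_smul_le_of_mem_Icc hV hs hc
  have hBvol : volume B = _ := volume_Icc_visibilityScale_div hs
  have hs0 : 0 < ∏ j, s j := Finset.prod_pos fun j _ => one_pos.trans_le (hs j)
  obtain ⟨x, hx, hxB⟩ := exists_setLIntegral_enorm_add_sub_le hu k L hB4 fun c hc =>
    hLV c ▸ setLIntegral_enorm_fderiv_sum_smul_le hu hs hS hc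
  have hfinite : IsFiniteMeasure (volume.restrict B) := ⟨by simp [hBvol]⟩
  have hnear : volume B ≤ 2 * ∫⁻ c in B, ENNReal.ofReal (inner ℝ (u x) (u (x + L c)) ^ 2) := by
    have huc := hu.continuous
    have hmeas : Continuous fun c => ‖u (x + L c) - u x‖ₑ := by fun_prop
    simpa using measure_univ_le_two_mul_lintegral_inner_sq (ν := volume.restrict B)
      (fun c => hu1 (x + L c)) (hu1 x) hmeas.measurable (by simpa using hxB)
  have hchange := ofReal_abs_det_mul_setLIntegral_le volume L x measurableSet_Icc
    (fun c hc => add_mem_unitCube hx (hB4 c hc))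
    fun y => ENNReal.ofReal (inner ℝ (u x) (u y) ^ 2)
  have hvol : ENNReal.ofReal |L.det| * volume B ≤ ENNReal.ofReal (2 * τ) :=
    calc ENNReal.ofReal |L.det| * volume B
        ≤ 2 * (ENNReal.ofReal |L.det| *
            ∫⁻ c in B, ENNReal.ofReal (inner ℝ (u x) (u (x + L c)) ^ 2)) := by
          rw [mul_left_comm]
          gcongr
      _ ≤ 2 * ENNReal.ofReal τ := by grw [hchange, hτ _ (hu1 x)]
      _ = ENNReal.ofReal (2 * τ) := by rw [ENNReal.ofReal_mul zero_le_two, ENNReal.ofReal_ofNat]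
  rw [hBvol, hLdet, ← ENNReal.ofReal_mul (abs_nonneg _),
    ENNReal.ofReal_le_ofReal_iff (by positivity), mul_div_assoc', div_le_iff₀ hs0, mul_comm] at hvol
  exact hvol

end UnitCube

section Tubes

variable {F : Type*} [NormedAddCommGroup F] [NormedSpace ℝ F] {v : F}

lemma one_le_volume_setOf_sub_smul_mem_closedBall {p y : F} {R : ℝ} (hv : ‖v‖ ≤ 1)
    (h : ∃ t : ℝ, ‖y - (p + t • v)‖ ≤ R) :
    1 ≤ volume {t : ℝ | y - t • v ∈ Metric.closedBall p (R + 1)} := by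
  obtain ⟨t₀, ht₀⟩ := h
  calc (1 : ℝ≥0∞) = volume (Set.Icc t₀ (t₀ + 1)) := by simp
    _ ≤ volume {t : ℝ | y - t • v ∈ Metric.closedBall p (R + 1)} := by
        refine measure_mono fun t ht => ?_
        have hsplit : y - t • v - p = (y - (p + t₀ • v)) - (t - t₀) • v := by module
        have hshift : ‖(t - t₀) • v‖ ≤ 1 := by
          rw [norm_smul, Real.norm_of_nonneg (sub_nonneg.2 ht.1)]
          exact mul_le_one₀ (by linarith [ht.2]) (norm_nonneg v) hv
        rw [Set.mem_ofPred_eq, mem_closedBall_iff_norm, hsplit]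
        exact (norm_sub_le _ _).trans (add_le_add ht₀ hshift)

variable [FiniteDimensional ℝ F] [MeasurableSpace F] [BorelSpace F] (μ : Measure F)
  [μ.IsAddHaarMeasure] {f : F → ℝ≥0∞}

lemma lintegral_mul_volume_setOf_sub_smul_mem (hf : Measurable f) {W : Set F}
    (hW : MeasurableSet W) (v : F) :
    ∫⁻ y, f y * volume {t : ℝ | y - t • v ∈ W} ∂μ = ∫⁻ x in W, (∫⁻ t : ℝ, f (x + t • v)) ∂μ := by
  have hsub : Measurable fun z : F × ℝ => z.1 - z.2 • v := by fun_prop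
  have hadd : Measurable fun z : ℝ × F => z.2 + z.1 • v := by fun_prop
  have hχ : Measurable (W.indicator (1 : F → ℝ≥0∞)) := measurable_one.indicator hW
  calc ∫⁻ y, f y * volume {t : ℝ | y - t • v ∈ W} ∂μ
      = ∫⁻ y, (∫⁻ t : ℝ, f y * W.indicator 1 (y - t • v)) ∂μ := by
        refine lintegral_congr fun y => ?_
        have hy : Measurable fun t : ℝ => y - t • v := by fun_prop
        have hyW : MeasurableSet {t : ℝ | y - t • v ∈ W} := hy hW
        rw [← lintegral_indicator_one hyW]
        exact (lintegral_const_mul _ (hχ.comp hy)).symm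
    _ = ∫⁻ t : ℝ, ∫⁻ y, f y * W.indicator 1 (y - t • v) ∂μ :=
        lintegral_lintegral_swap ((hf.comp measurable_fst).mul (hχ.comp hsub)).aemeasurable
    _ = ∫⁻ t : ℝ, ∫⁻ x, f (x + t • v) * W.indicator 1 x ∂μ := by
        refine lintegral_congr fun t => ?_
        rw [← lintegral_add_right_eq_self _ (t • v)]
        simp only [add_sub_cancel_right]
    _ = ∫⁻ t : ℝ, ∫⁻ x in W, f (x + t • v) ∂μ := by
        refine lintegral_congr fun t => ?_
        rw [← lintegral_indicator hW]
        refine lintegral_congr fun x => ?_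
        by_cases hx : x ∈ W <;> simp [hx]
    _ = ∫⁻ x in W, (∫⁻ t : ℝ, f (x + t • v)) ∂μ :=
        lintegral_lintegral_swap (hf.comp hadd).aemeasurable

lemma setLIntegral_le_of_forall_lintegral_line_le (hf : Measurable f) (hv : ‖v‖ ≤ 1) {p : F}
    {R : ℝ} {U : Set F} (hU : ∀ x ∈ U, ∃ t : ℝ, ‖x - (p + t • v)‖ ≤ R) {b : ℝ≥0∞}
    (hb : ∀ x, ∫⁻ t : ℝ, f (x + t • v) ≤ b) :
    ∫⁻ x in U, f x ∂μ ≤ b * μ (Metric.closedBall p (R + 1)) := by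
  have hW : MeasurableSet (Metric.closedBall p (R + 1)) := Metric.isClosed_closedBall.measurableSet
  have hvol : Measurable fun y => volume {t : ℝ | y - t • v ∈ Metric.closedBall p (R + 1)} :=
    measurable_measure_prodMk_left
      (hW.preimage (by fun_prop : Measurable fun z : F × ℝ => z.1 - z.2 • v))
  calc ∫⁻ x in U, f x ∂μ
      ≤ ∫⁻ y in U, f y * volume {t : ℝ | y - t • v ∈ Metric.closedBall p (R + 1)} ∂μ :=
        setLIntegral_mono (hf.mul hvol) fun y hy =>
          le_mul_of_one_le_right' (one_le_volume_setOf_sub_smul_mem_closedBall hv (hU y hy))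
    _ ≤ ∫⁻ y, f y * volume {t : ℝ | y - t • v ∈ Metric.closedBall p (R + 1)} ∂μ :=
        setLIntegral_le_lintegral _ _
    _ = ∫⁻ x in Metric.closedBall p (R + 1), (∫⁻ t : ℝ, f (x + t • v)) ∂μ :=
        lintegral_mul_volume_setOf_sub_smul_mem μ hf hW v
    _ ≤ b * μ (Metric.closedBall p (R + 1)) := by
        rw [← setLIntegral_const]
        exact lintegral_mono fun x => hb x

lemma pairwiseDisjoint_unitCube {ι : Type*} (s : Set (ι → ℤ)) : s.PairwiseDisjoint unitCube := by
  refine fun k _ l _ hkl => Set.disjoint_left.2 fun x hk hl => hkl (funext fun i => ?_)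
  rw [← Int.floor_eq_iff.2 (hk i trivial), ← Int.floor_eq_iff.2 (hl i trivial)]

lemma sum_setLIntegral_unitCube_le {ι : Type*} [Fintype ι] {f : (ι → ℝ) → ℝ≥0∞}
    (hf : Measurable f) {p v : ι → ℝ} (hv : ‖v‖ ≤ 1) {R : ℝ} {s : Finset (ι → ℤ)}
    (hs : ∀ k ∈ s, ∀ x ∈ unitCube k, ∃ t : ℝ, ‖x - (p + t • v)‖ ≤ R) {b : ℝ≥0∞}
    (hb : ∀ x, ∫⁻ t : ℝ, f (x + t • v) ≤ b) :
    ∑ k ∈ s, ∫⁻ x in unitCube k, f x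
      ≤ b * volume (Metric.closedBall (0 : ι → ℝ) (R + 1)) := by
  rw [← lintegral_biUnion_finset (pairwiseDisjoint_unitCube _)
    (fun k _ => MeasurableSet.univ_pi fun _ => measurableSet_Ico),
    ← Measure.addHaar_closedBall_center volume p]
  refine setLIntegral_le_of_forall_lintegral_line_le volume hf hv (fun x hx => ?_) hb
  obtain ⟨k, hk, hx⟩ := Set.mem_iUnion₂.1 hx
  exact hs k hk x hx

lemma exists_norm_sub_le_of_cylinder_inter_latticeCube_nonempty {n : ℕ}
    {p v : EuclideanSpace ℝ (Fin n)} {r : ℝ} {k : Fin n → ℤ}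
    (h : (cylinder p v r ∩ latticeCube k).Nonempty) {x : Fin n → ℝ} (hx : x ∈ unitCube k) :
    ∃ t : ℝ, ‖x - (⇑p + t • ⇑v)‖ ≤ r + 2 := by
  obtain ⟨y, hyline, hycube⟩ := h
  have hne : {z : EuclideanSpace ℝ (Fin n) | ∃ t : ℝ, z = p + t • v}.Nonempty := ⟨_, 0, rfl⟩
  obtain ⟨_, ⟨t, rfl⟩, hyt⟩ := (Metric.infDist_lt_iff hne).1 (hyline.trans_lt (lt_add_one r))
  refine ⟨t, (norm_sub_le_norm_sub_add_norm_sub _ ⇑y _).trans ?_⟩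
  have hxy : ‖x - ⇑y‖ ≤ 1 := (pi_norm_le_iff_of_nonneg zero_le_one).2 fun i => by
    have hxi := Set.mem_Ico.1 (hx i trivial)
    have hyi := hycube i
    exact abs_le.2 (by constructor <;> simp only [Pi.sub_apply] <;> linarith [hxi.1, hxi.2])
  have hyp : ‖⇑y - (⇑p + t • ⇑v)‖ ≤ r + 1 :=
    (pi_norm_le_iff_of_nonneg (dist_nonneg.trans hyt.le)).2 fun i =>
      (PiLp.norm_apply_le (y - (p + t • v)) i).trans (by simpa [dist_eq_norm] using hyt.le)
  linarith

end Tubes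

section MultilinearKakeya

variable {ι E : Type*} [Fintype ι] [NormedAddCommGroup E] [InnerProductSpace ℝ E]

lemma sum_prod_rpow_le_prod_sum_rpow {κ : Type*} (s : Finset κ) {p : ι → ℝ} (hp : ∑ j, p j = 1)
    (hp0 : ∀ j, 0 ≤ p j) (a : ι → κ → ℝ≥0∞) :
    ∑ k ∈ s, ∏ j, a j k ^ p j ≤ ∏ j, (∑ k ∈ s, a j k) ^ p j := by
  let _ : MeasurableSpace κ := ⊤
  simpa [lintegral_finset] using ENNReal.lintegral_prod_norm_pow_le (μ := Measure.count.restrict s)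
    Finset.univ (fun j _ => (measurable_from_top (f := a j)).aemeasurable) hp fun j _ => hp0 j

/-- The exponent `e` is the one for which `G * G ^ e` is the `card ι`-th power of `G ^ e`: take
`card ι`-th roots, sum over `k` and apply Hölder's inequality. -/
lemma mul_sum_rpow_pow_le_of_mul_rpow_le_prod {κ : Type*} {s : Finset κ} {e : ℝ} (he : 0 ≤ e)
    (hcard : 1 + e = e * Fintype.card ι) {c Z : ℝ≥0∞} {G : κ → ℝ≥0∞} {a : ι → κ → ℝ≥0∞}
    (h : ∀ k ∈ s, c * (G k * G k ^ e) ≤ Z * ∏ j, a j k) :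
    c * (∑ k ∈ s, G k ^ e) ^ Fintype.card ι ≤ Z * ∏ j, ∑ k ∈ s, a j k := by
  have hN : (0 : ℝ) < Fintype.card ι := by
    refine (Nat.cast_nonneg _).lt_of_ne fun h0 => ?_
    rw [← h0] at hcard
    linarith
  set q : ℝ := (Fintype.card ι : ℝ)⁻¹ with hq
  have hq0 : 0 ≤ q := by positivity
  have hroot : ∀ x : ℝ≥0∞, (x ^ Fintype.card ι) ^ q = x := fun x => by
    rw [← ENNReal.rpow_natCast, ← ENNReal.rpow_mul, mul_inv_cancel₀ hN.ne', ENNReal.rpow_one]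
  have hterm : ∀ k ∈ s, c ^ q * G k ^ e ≤ Z ^ q * ∏ j, a j k ^ q := fun k hk => by
    have hG : G k * G k ^ e = (G k ^ e) ^ Fintype.card ι := by
      rw [← ENNReal.rpow_natCast, ← ENNReal.rpow_mul, ← hcard,
        ENNReal.rpow_add_of_nonneg _ _ zero_le_one he, ENNReal.rpow_one]
    have hpow := ENNReal.rpow_le_rpow (h k hk) hq0
    rwa [hG, ENNReal.mul_rpow_of_nonneg _ _ hq0, ENNReal.mul_rpow_of_nonneg _ _ hq0, hroot,
      ← ENNReal.prod_rpow_of_nonneg hq0] at hpow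
  rw [← ENNReal.rpow_le_rpow_iff (inv_pos.2 hN), ENNReal.mul_rpow_of_nonneg _ _ hq0,
    ENNReal.mul_rpow_of_nonneg _ _ hq0, hroot, ← ENNReal.prod_rpow_of_nonneg hq0]
  calc c ^ q * ∑ k ∈ s, G k ^ e
      ≤ ∑ k ∈ s, Z ^ q * ∏ j, a j k ^ q := by
        rw [Finset.mul_sum]
        exact Finset.sum_le_sum hterm
    _ ≤ Z ^ q * ∏ j, (∑ k ∈ s, a j k) ^ q := by
        rw [← Finset.mul_sum]
        gcongr
        exact sum_prod_rpow_le_prod_sum_rpow s (by simp [hq, hN.ne']) (fun _ => hq0) a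

/-- The `L¹` norm over `unitCube k` of the derivative of `u` in the direction `w`. -/
noncomputable def cubeVariation (u : (ι → ℝ) → E) (k : ι → ℤ) (w : ι → ℝ) : ℝ≥0∞ :=
  ∫⁻ x in unitCube k, ‖fderiv ℝ u x w‖ₑ

variable [DecidableEq ι] {u : (ι → ℝ) → E}

lemma enorm_det_mul_le_prod_cubeVariation (hu : ContDiff ℝ 1 u) (hu1 : ∀ x, ‖u x‖ = 1)
    {k : ι → ℤ} {M : ℝ≥0∞} (hM : M ≠ ∞)
    (hbal : ∀ w, ‖w‖ = 1 → M * ∫⁻ x in unitCube k, ENNReal.ofReal (inner ℝ w (u x) ^ 2) ≤ 2)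
    {V : ι → ι → ℝ} (hV : ∀ j, ‖V j‖ ≤ 1) :
    ENNReal.ofReal (visibilityScale (Fintype.card ι) ^ Fintype.card ι)
        * (‖(Matrix.of fun i j => V j i).det‖ₑ * M)
      ≤ 4 * ∏ j, (1 + cubeVariation u k (V j)) := by
  rcases eq_or_ne M 0 with rfl | hM0
  · simp
  by_cases htop : ∃ j, cubeVariation u k (V j) = ∞
  · obtain ⟨j, hj⟩ := htop
    rw [← Finset.mul_prod_erase _ _ (Finset.mem_univ j), hj, add_top,
      ENNReal.top_mul (Finset.prod_ne_zero_iff.2 fun _ _ => by simp), ENNReal.mul_top four_ne_zero]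
    exact le_top
  push Not at htop
  have hM' : 0 < M.toReal := ENNReal.toReal_pos hM0 hM
  have hvis := visibilityScale_pow_mul_abs_det_le hu hu1 (V := V) (τ := 2 / M.toReal)
    (s := fun j => 1 + (cubeVariation u k (V j)).toReal) (by positivity)
    (fun w hw => by
      rw [ENNReal.ofReal_div_of_pos hM', ENNReal.ofReal_toReal hM, ENNReal.ofReal_ofNat,
        ENNReal.le_div_iff_mul_le (.inl hM0) (.inl hM), mul_comm]
      exact hbal w hw)
    hV (fun j => le_add_of_nonneg_right ENNReal.toReal_nonneg)
    (fun j => (ENNReal.le_ofReal_iff_toReal_le (htop j) (by positivity)).2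
      (le_add_of_nonneg_left zero_le_one))
  have hprod_ne : ∏ j, (1 + cubeVariation u k (V j)) ≠ ∞ :=
    ENNReal.prod_ne_top fun j _ => ENNReal.add_ne_top.2 ⟨ENNReal.one_ne_top, htop j⟩
  rw [← ENNReal.toReal_le_toReal (by finiteness) (by finiteness)]
  have hprod : (∏ j, (1 + cubeVariation u k (V j))).toReal
      = ∏ j, (1 + (cubeVariation u k (V j)).toReal) := by
    rw [ENNReal.toReal_prod]
    exact Finset.prod_congr rfl fun j _ => ENNReal.toReal_add ENNReal.one_ne_top (htop j)
  rw [ENNReal.toReal_mul, ENNReal.toReal_mul, ENNReal.toReal_mul, hprod, toReal_enorm,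
    ENNReal.toReal_ofReal (pow_nonneg (visibilityScale_pos _).le _), Real.norm_eq_abs, ← mul_assoc,
    ← le_div_iff₀ hM']
  refine hvis.trans_eq ?_
  simp only [ENNReal.toReal_ofNat]
  ring

variable {α : ι → Type*}

/-- The number of tuples of indices `a j ∈ S j`, each weighted by the volume of the parallelepiped
spanned by the directions `v j (a j)`. -/
noncomputable def transverseWeight (v : ∀ j, α j → ι → ℝ) (S : ∀ j, Finset (α j)) : ℝ≥0∞ :=
  ∑ a ∈ Fintype.piFinset S, ‖(Matrix.of fun i j => v j (a j) i).det‖ₑ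

lemma transverseWeight_ne_top (v : ∀ j, α j → ι → ℝ) (S : ∀ j, Finset (α j)) :
    transverseWeight v S ≠ ∞ :=
  ENNReal.sum_ne_top.2 fun _ _ => enorm_ne_top

lemma transverseWeight_mul_le (hu : ContDiff ℝ 1 u) (hu1 : ∀ x, ‖u x‖ = 1) {k : ι → ℤ} {M : ℝ≥0∞}
    (hM : M ≠ ∞)
    (hbal : ∀ w, ‖w‖ = 1 → M * ∫⁻ x in unitCube k, ENNReal.ofReal (inner ℝ w (u x) ^ 2) ≤ 2)
    {v : ∀ j, α j → ι → ℝ} (hv : ∀ j a, ‖v j a‖ ≤ 1) (S : ∀ j, Finset (α j)) :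
    ENNReal.ofReal (visibilityScale (Fintype.card ι) ^ Fintype.card ι) * (transverseWeight v S * M)
      ≤ 4 * ∏ j, ∑ a ∈ S j, (1 + cubeVariation u k (v j a)) := by
  rw [transverseWeight, Finset.sum_mul, Finset.mul_sum, Finset.prod_univ_sum, Finset.mul_sum]
  exact Finset.sum_le_sum fun a _ =>
    enorm_det_mul_le_prod_cubeVariation hu hu1 hM hbal fun j => hv j (a j)

lemma transverseWeight_mul_le_of_div (hu : ContDiff ℝ 1 u) (hu1 : ∀ x, ‖u x‖ = 1) {k : ι → ℤ}
    {D W Z : ℝ≥0∞} (hD : D ≠ ∞) (hW : W ≠ ∞) (hZ0 : Z ≠ 0) (hZtop : Z ≠ ∞)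
    (hbal : ∀ w, ‖w‖ = 1 →
      D * (W / Z * ∫⁻ x in unitCube k, ENNReal.ofReal (inner ℝ w (u x) ^ 2)) ≤ 2)
    {v : ∀ j, α j → ι → ℝ} (hv : ∀ j a, ‖v j a‖ ≤ 1) (S : ∀ j, Finset (α j)) :
    ENNReal.ofReal (visibilityScale (Fintype.card ι) ^ Fintype.card ι) * D
        * (transverseWeight v S * W)
      ≤ 4 * Z * ∏ j, ∑ a ∈ S j, (1 + cubeVariation u k (v j a)) := by
  have hM : D * (W / Z) ≠ ∞ := ENNReal.mul_ne_top hD (ENNReal.div_ne_top hW hZ0)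
  have hmul := transverseWeight_mul_le hu hu1 hM
    (fun w hw => (mul_assoc _ _ _).trans_le (hbal w hw)) hv S
  have hWZ : W = Z * (W / Z) := (ENNReal.mul_div_cancel hZ0 hZtop).symm
  generalize ENNReal.ofReal (visibilityScale (Fintype.card ι) ^ Fintype.card ι) = c at hmul ⊢
  calc c * D * (transverseWeight v S * W)
      = Z * (c * (transverseWeight v S * (D * (W / Z)))) := by
        conv_lhs => rw [hWZ]
        ring
    _ ≤ Z * (4 * ∏ j, ∑ a ∈ S j, (1 + cubeVariation u k (v j a))) := by gcongr
    _ = _ := by ring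

omit [DecidableEq ι] in
lemma sum_sum_one_add_cubeVariation_le {β : Type*} [Fintype β] (hu : ContDiff ℝ 1 u) {b : ℝ≥0∞}
    (hb : ∀ p v : ι → ℝ, ∫⁻ t : ℝ, ‖fderiv ℝ u (p + t • v) v‖ₑ ≤ b) {p v : β → ι → ℝ}
    (hv : ∀ a, ‖v a‖ ≤ 1) {R : ℝ} {S : (ι → ℤ) → Finset β}
    (hS : ∀ k, ∀ a ∈ S k, ∀ x ∈ unitCube k, ∃ t : ℝ, ‖x - (p a + t • v a)‖ ≤ R)
    (s : Finset (ι → ℤ)) :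
    ∑ k ∈ s, ∑ a ∈ S k, (1 + cubeVariation u k (v a))
      ≤ Fintype.card β * (s.card + b * volume (Metric.closedBall (0 : ι → ℝ) (R + 1))) := by
  classical
  calc ∑ k ∈ s, ∑ a ∈ S k, (1 + cubeVariation u k (v a))
      = ∑ a, ∑ k ∈ s with a ∈ S k, (1 + cubeVariation u k (v a)) :=
        Finset.sum_comm' (by simp)
    _ ≤ ∑ _ : β, (s.card + b * volume (Metric.closedBall (0 : ι → ℝ) (R + 1))) := by
        refine Finset.sum_le_sum fun a _ => ?_
        rw [Finset.sum_add_distrib, Finset.sum_const, nsmul_one]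
        refine add_le_add (mod_cast Finset.card_filter_le _ _) ?_
        exact sum_setLIntegral_unitCube_le (continuous_enorm_fderiv_apply hu (v a)).measurable
          (hv a) (fun k hk => hS k a (Finset.mem_filter.1 hk).2) fun x => hb x (v a)
    _ = _ := by rw [Finset.sum_const, Finset.card_univ, nsmul_eq_mul]

/-- The share of one cylinder of radius about `R - 2` in the variation of a balanced map of degree
`d`, counted in units of `d`, plus one for the cubes it meets. -/
noncomputable def tubeConst (ι : Type*) [Fintype ι] (R : ℝ) : ℝ≥0∞ :=
  1 + ENNReal.ofReal (separationConst⁻¹ * Fintype.card ι)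
    * volume (Metric.closedBall (0 : ι → ℝ) (R + 1))

lemma tubeConst_ne_zero (ι : Type*) [Fintype ι] (R : ℝ) : tubeConst ι R ≠ 0 :=
  (one_pos.trans_le le_self_add).ne'

lemma tubeConst_ne_top (ι : Type*) [Fintype ι] (R : ℝ) : tubeConst ι R ≠ ∞ :=
  ENNReal.add_ne_top.2 ⟨ENNReal.one_ne_top,
    ENNReal.mul_ne_top ENNReal.ofReal_ne_top measure_closedBall_lt_top.ne⟩

omit [DecidableEq ι] in
lemma natCast_add_ofReal_mul_volume_le (d : ℕ) (R : ℝ) :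
    d + ENNReal.ofReal (separationConst⁻¹ * (Fintype.card ι * d : ℕ))
      * volume (Metric.closedBall (0 : ι → ℝ) (R + 1)) ≤ (d + 1) * tubeConst ι R := by
  have hsplit : ENNReal.ofReal (separationConst⁻¹ * (Fintype.card ι * d : ℕ))
      = d * ENNReal.ofReal (separationConst⁻¹ * Fintype.card ι) := by
    rw [← ENNReal.ofReal_natCast d, ← ENNReal.ofReal_mul (Nat.cast_nonneg d)]
    congr 1
    push_cast
    ring
  calc _ = (d : ℝ≥0∞) * tubeConst ι R := by
        rw [hsplit, tubeConst]
        ring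
    _ ≤ (d + 1) * tubeConst ι R := by
        gcongr
        exact le_self_add

lemma mul_sum_transverseWeight_rpow_pow_le [∀ j, Fintype (α j)] {e : ℝ} (he : 0 ≤ e)
    (hcard : 1 + e = e * Fintype.card ι) {p v : ∀ j, α j → ι → ℝ} (hv : ∀ j a, ‖v j a‖ ≤ 1)
    {R : ℝ} {S : (ι → ℤ) → ∀ j, Finset (α j)}
    (hS : ∀ k j, ∀ a ∈ S k j, ∀ x ∈ unitCube k, ∃ t : ℝ, ‖x - (p j a + t • v j a)‖ ≤ R)
    {s : Finset (ι → ℤ)} {Z : ℝ≥0∞} (hZ : Z = ∑ k ∈ s, transverseWeight v (S k) ^ e)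
    (hZ0 : Z ≠ 0) (hZtop : Z ≠ ∞) :
    ENNReal.ofReal (visibilityScale (Fintype.card ι) ^ Fintype.card ι) * Z ^ Fintype.card ι
      ≤ Z * (4 * tubeConst ι R ^ Fintype.card ι * ∏ j, (Fintype.card (α j) : ℝ≥0∞)) := by
  obtain ⟨u, hu, hu1, hbal, hline⟩ := exists_balanced_map s.card (K := s)
    (M := fun k => transverseWeight v (S k) ^ e / Z)
    (by simp_rw [div_eq_mul_inv]; rw [← Finset.sum_mul, ← hZ, ENNReal.mul_inv_cancel hZ0 hZtop])
  have hD : ((s.card : ℝ≥0∞) + 1) ^ Fintype.card ι ≠ ∞ := by finiteness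
  have hvis := fun k hk => transverseWeight_mul_le_of_div hu hu1 hD
    (ENNReal.rpow_ne_top_of_nonneg he (transverseWeight_ne_top v (S k))) hZ0 hZtop
    (hbal k hk) hv (S k)
  have htubes : ∀ j, ∑ k ∈ s, ∑ a ∈ S k j, (1 + cubeVariation u k (v j a))
      ≤ Fintype.card (α j) * ((s.card + 1) * tubeConst ι R) := fun j => by
    grw [sum_sum_one_add_cubeVariation_le hu hline (hv j) (fun k => hS k j) s,
      natCast_add_ofReal_mul_volume_le]
  generalize ENNReal.ofReal (visibilityScale (Fintype.card ι) ^ Fintype.card ι) = c at hvis ⊢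
  have hD0 : ((s.card : ℝ≥0∞) + 1) ^ Fintype.card ι ≠ 0 := by positivity
  refine (ENNReal.mul_le_mul_iff_right hD0 hD).1 ?_
  calc ((s.card : ℝ≥0∞) + 1) ^ Fintype.card ι * (c * Z ^ Fintype.card ι)
      = c * ((s.card : ℝ≥0∞) + 1) ^ Fintype.card ι * Z ^ Fintype.card ι := by ring
    _ ≤ 4 * Z * ∏ j, ∑ k ∈ s, ∑ a ∈ S k j, (1 + cubeVariation u k (v j a)) := by
        rw [hZ] at hvis ⊢
        exact mul_sum_rpow_pow_le_of_mul_rpow_le_prod he hcard hvis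
    _ ≤ 4 * Z * ∏ j, (Fintype.card (α j) * ((s.card + 1) * tubeConst ι R)) := by
        gcongr with j
        exact htubes j
    _ = _ := by
        rw [Finset.prod_mul_distrib, Finset.prod_const, Finset.card_univ, mul_pow]
        ring

/-- The constant with which `tsum_transverseWeight_rpow_le` holds. -/
noncomputable def kakeyaConst (ι : Type*) [Fintype ι] (R : ℝ) : ℝ≥0∞ :=
  4 * tubeConst ι R ^ Fintype.card ι
    / ENNReal.ofReal (visibilityScale (Fintype.card ι) ^ Fintype.card ι)

lemma ofReal_visibilityScale_pow_ne_zero (n : ℕ) : ENNReal.ofReal (visibilityScale n ^ n) ≠ 0 :=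
  (ENNReal.ofReal_pos.2 (pow_pos (visibilityScale_pos n) n)).ne'

lemma kakeyaConst_ne_zero (ι : Type*) [Fintype ι] (R : ℝ) : kakeyaConst ι R ≠ 0 :=
  ENNReal.div_ne_zero.2
    ⟨mul_ne_zero four_ne_zero (pow_ne_zero _ (tubeConst_ne_zero ι R)), ENNReal.ofReal_ne_top⟩

lemma kakeyaConst_ne_top (ι : Type*) [Fintype ι] (R : ℝ) : kakeyaConst ι R ≠ ∞ :=
  ENNReal.div_ne_top
    (ENNReal.mul_ne_top ENNReal.ofNat_ne_top (ENNReal.pow_ne_top (tubeConst_ne_top ι R)))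
    (ofReal_visibilityScale_pow_ne_zero _)

theorem tsum_transverseWeight_rpow_le [∀ j, Fintype (α j)] {e : ℝ} (he : 0 < e)
    (hcard : 1 + e = e * Fintype.card ι) {p v : ∀ j, α j → ι → ℝ} (hv : ∀ j a, ‖v j a‖ ≤ 1)
    {R : ℝ} {S : (ι → ℤ) → ∀ j, Finset (α j)}
    (hS : ∀ k j, ∀ a ∈ S k j, ∀ x ∈ unitCube k, ∃ t : ℝ, ‖x - (p j a + t • v j a)‖ ≤ R) :
    ∑' k, transverseWeight v (S k) ^ e
      ≤ (kakeyaConst ι R * ∏ j, (Fintype.card (α j) : ℝ≥0∞)) ^ e := by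
  rw [ENNReal.tsum_eq_iSup_sum]
  refine iSup_le fun s => ?_
  set Z := ∑ k ∈ s, transverseWeight v (S k) ^ e with hZ
  rcases eq_or_ne Z 0 with hZ0 | hZ0
  · exact hZ0.trans_le zero_le
  have hZtop : Z ≠ ∞ := ENNReal.sum_ne_top.2 fun k _ =>
    ENNReal.rpow_ne_top_of_nonneg he.le (transverseWeight_ne_top v (S k))
  have hpow : Z ^ Fintype.card ι = Z * Z ^ e⁻¹ := by
    have hexp : (Fintype.card ι : ℝ) = 1 + e⁻¹ := by
      field_simp
      linarith
    rw [← ENNReal.rpow_natCast, hexp, ENNReal.rpow_add_of_nonneg _ _ zero_le_one (by positivity),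
      ENNReal.rpow_one]
  have hmain := mul_sum_transverseWeight_rpow_pow_le he.le hcard hv hS hZ hZ0 hZtop
  rw [hpow, mul_left_comm, ENNReal.mul_le_mul_iff_right hZ0 hZtop] at hmain
  rw [← ENNReal.rpow_inv_le_iff he, kakeyaConst, ← ENNReal.mul_div_right_comm,
    ENNReal.le_div_iff_mul_le (.inl (ofReal_visibilityScale_pow_ne_zero _))
      (.inl ENNReal.ofReal_ne_top), mul_comm]
  exact hmain

end MultilinearKakeya

section Cylinders

variable {n : ℕ}

open Classical in
/-- The indices of the cylinders of radius `r` that meet `latticeCube k`. -/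
noncomputable def touchingIndices {β : Type*} [Fintype β] (p v : β → EuclideanSpace ℝ (Fin n))
    (r : ℝ) (k : Fin n → ℤ) : Finset β :=
  {a | (cylinder (p a) (v a) r ∩ latticeCube k).Nonempty}

theorem multilinear_kakeya_cubes_general (n : ℕ) (hn : 2 ≤ n) (r : ℝ) :
    ∃ C : ℝ, 0 < C ∧ ∀ {α : Fin n → Type*} [∀ j, Fintype (α j)]
      (p v : ∀ j, α j → EuclideanSpace ℝ (Fin n)), (∀ j a, ‖v j a‖ ≤ 1) →
        ∑' k : Fin n → ℤ, transverseWeight (fun j a => ⇑(v j a))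
            (fun j => touchingIndices (p j) (v j) r k) ^ (1 / ((n : ℝ) - 1))
          ≤ ENNReal.ofReal (C * ∏ j, (Fintype.card (α j) : ℝ) ^ (1 / ((n : ℝ) - 1))) := by
  have hn1 : (0 : ℝ) < n - 1 := sub_pos.2 (by exact_mod_cast hn)
  have hK0 := kakeyaConst_ne_zero (Fin n) (r + 2)
  have hKtop := kakeyaConst_ne_top (Fin n) (r + 2)
  set e : ℝ := 1 / ((n : ℝ) - 1) with he
  have he0 : 0 < e := by positivity
  refine ⟨(kakeyaConst (Fin n) (r + 2)).toReal ^ e,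
    Real.rpow_pos_of_pos (ENNReal.toReal_pos hK0 hKtop) e, fun {α} _ p v hv => ?_⟩
  refine (tsum_transverseWeight_rpow_le he0 (by rw [Fintype.card_fin, he]; field_simp; ring)
    (p := fun j a => ⇑(p j a)) (R := r + 2)
    (fun j a => (pi_norm_le_iff_of_nonneg zero_le_one).2 fun i =>
      (PiLp.norm_apply_le (v j a) i).trans (hv j a))
    (fun k j a ha x hx => exists_norm_sub_le_of_cylinder_inter_latticeCube_nonempty
      (by simpa [touchingIndices] using ha) hx)).trans_eq ?_
  rw [Real.finsetProd_rpow _ _ fun j _ => Nat.cast_nonneg _, ← Real.mul_rpow (by positivity)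
    (by positivity), ← ENNReal.ofReal_rpow_of_nonneg (by positivity) he0.le,
    ENNReal.ofReal_mul ENNReal.toReal_nonneg, ENNReal.ofReal_toReal hKtop,
    ENNReal.ofReal_prod_of_nonneg fun j _ => Nat.cast_nonneg _]
  simp only [ENNReal.ofReal_natCast]

lemma ofReal_mul_prod_card_le_transverseWeight {ι : Type*} [Fintype ι] [DecidableEq ι]
    {α : ι → Type*} {v : ∀ j, α j → ι → ℝ} {θ : ℝ}
    (hθ : ∀ a : ∀ j, α j, θ ≤ |(Matrix.of fun i j => v j (a j) i).det|)
    (S : ∀ j, Finset (α j)) :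
    ENNReal.ofReal θ * ∏ j, ((S j).card : ℝ≥0∞) ≤ transverseWeight v S := by
  rw [mul_comm, ← Nat.cast_prod, ← Fintype.card_piFinset, ← nsmul_eq_mul]
  refine Finset.card_nsmul_le_sum _ _ _ fun a _ => ?_
  rw [← ofReal_norm, Real.norm_eq_abs]
  exact ENNReal.ofReal_le_ofReal (hθ a)

lemma tsum_rpow_le_of_tsum_ofReal_mul_rpow_le {κ : Type*} {F : κ → ℝ} {θ e X : ℝ} (hF : 0 ≤ F)
    (hθ : 0 < θ) (he : 0 ≤ e) (hX : 0 ≤ X)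
    (h : ∑' k, (ENNReal.ofReal θ * ENNReal.ofReal (F k)) ^ e ≤ ENNReal.ofReal X) :
    ∑' k, F k ^ e ≤ θ ^ (-e) * X := by
  refine Real.tsum_le_of_sum_le (fun k => Real.rpow_nonneg (hF k) e) fun s => ?_
  rw [Real.rpow_neg hθ.le, ← div_eq_inv_mul, le_div_iff₀ (Real.rpow_pos_of_pos hθ e), mul_comm,
    Finset.mul_sum, ← ENNReal.ofReal_le_ofReal_iff hX,
    ENNReal.ofReal_sum_of_nonneg fun k _ =>
      mul_nonneg (Real.rpow_nonneg hθ.le e) (Real.rpow_nonneg (hF k) e)]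
  refine (Finset.sum_le_sum fun k _ => ?_).trans ((ENNReal.sum_le_tsum s).trans h)
  rw [← Real.mul_rpow hθ.le (hF k), ← ENNReal.ofReal_rpow_of_nonneg (mul_nonneg hθ.le (hF k)) he,
    ENNReal.ofReal_mul hθ.le]

lemma tsum_prod_ncard_rpow_le {α : Fin n → Type*} [∀ j, Fintype (α j)]
    {p v : ∀ j, α j → EuclideanSpace ℝ (Fin n)} {θ r e X : ℝ} (hθ : 0 < θ)
    (hdet : ∀ a : ∀ j, α j, θ ≤ |(Matrix.of fun i j => v j (a j) i).det|) (he : 0 ≤ e)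
    (hX : 0 ≤ X)
    (h : ∑' k : Fin n → ℤ, transverseWeight (fun j a => ⇑(v j a))
      (fun j => touchingIndices (p j) (v j) r k) ^ e ≤ ENNReal.ofReal X) :
    ∑' k : Fin n → ℤ, (∏ j, ({a | (cylinder (p j a) (v j a) r ∩ latticeCube k).Nonempty}.ncard : ℝ))
      ^ e ≤ θ ^ (-e) * X := by
  refine tsum_rpow_le_of_tsum_ofReal_mul_rpow_le
    (fun k => Finset.prod_nonneg fun j _ => Nat.cast_nonneg _) hθ he hX
    ((ENNReal.tsum_le_tsum fun k => ENNReal.rpow_le_rpow ?_ he).trans h)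
  have hcard : ∀ j, {a | (cylinder (p j a) (v j a) r ∩ latticeCube k).Nonempty}.ncard
      = (touchingIndices (p j) (v j) r k).card := fun j => by
    rw [← Set.ncard_coe_finset, touchingIndices, Finset.coe_filter_univ]
  rw [ENNReal.ofReal_prod_of_nonneg fun j _ => Nat.cast_nonneg _]
  simp only [hcard, ENNReal.ofReal_natCast]
  exact ofReal_mul_prod_card_le_transverseWeight hdet _

end Cylinders

/-- **Discretized multilinear Kakeya.** For transverse families of unit cylinders, with
`M_j(Q)` the number of cylinders `T_{j,a}` meeting the unit lattice cube `Q` and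
`F(Q) = ∏_j M_j(Q)`, one has `∑_Q F(Q)^{1/(n-1)} ≤ C(n) θ^{-1/(n-1)} ∏_j A(j)^{1/(n-1)}`. -/
theorem multilinear_kakeya_cubes (n : ℕ) (hn : 2 ≤ n) :
    ∃ C : ℝ, 0 < C ∧
      ∀ (A : Fin n → ℕ) (p v : ∀ j : Fin n, Fin (A j) → EuclideanSpace ℝ (Fin n)) (θ : ℝ),
        0 < θ →
        (∀ j a, ‖v j a‖ = 1) →
        (∀ a : ∀ j : Fin n, Fin (A j),
          θ ≤ |Matrix.det (Matrix.of fun i j : Fin n => v j (a j) i)|) →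
        (∑' k : Fin n → ℤ,
            (∏ j : Fin n,
              (({a : Fin (A j) | (cylinder (p j a) (v j a) 1 ∩ latticeCube k).Nonempty}.ncard : ℝ)))
            ^ ((1:ℝ) / ((n:ℝ) - 1)))
          ≤ C * θ ^ (-(1:ℝ) / ((n:ℝ) - 1)) *
              ∏ j : Fin n, (A j : ℝ) ^ ((1:ℝ) / ((n:ℝ) - 1)) := by
  obtain ⟨C, hC, hbound⟩ := multilinear_kakeya_cubes_general n hn 1
  refine ⟨C, hC, fun A p v θ hθ hv hdet => ?_⟩
  have he : (0 : ℝ) ≤ 1 / (n - 1) := one_div_nonneg.2 (sub_nonneg.2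
    (by exact_mod_cast one_le_two.trans hn))
  rw [mul_comm C, mul_assoc, neg_div]
  exact tsum_prod_ncard_rpow_le hθ hdet he (by positivity)
    (by simpa only [Fintype.card_fin] using hbound p v fun j a => (hv j a).le)
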